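/- Let P ⊂ ℝⁿ be a pointed polyhedron equipped with an irredundant description. Then every circuit in C(P) is an edge direction of P if and only if for every m ∈ ℕ, every pointed polyhedron Q ⊆ ℝᵐ equipped with an irredundant description, and every linear map π : ℝᵐ → ℝⁿ with π(Q) = P, one has C(P) ⊆ π(C(Q)). -/

import Mathlib

open Matrix

noncomputable section

/-- The polyhedron `{x : Ax = b, Bx ≤ d}`. -/
def polySet {p q n : Type*} [Fintype n] (A : Matrix p n ℝ) (b : p → ℝ)
    (B : Matrix q n ℝ) (d : q → ℝ) : Set (n → ℝ) :=
  {x | A.mulVec x = b ∧ B.mulVec x ≤ d}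

/-- The circuits of the linear description `Ax = b, Bx ≤ d`: nonzero kernel elements `g` of `A`
whose support of `Bg` is inclusion-minimal among nonzero kernel elements. -/
def circuits {p q n : Type*} [Fintype n] (A : Matrix p n ℝ) (B : Matrix q n ℝ) :
    Set (n → ℝ) :=
  {g | A.mulVec g = 0 ∧ g ≠ 0 ∧
    ∀ y : n → ℝ, A.mulVec y = 0 → y ≠ 0 →
      {i | B.mulVec y i ≠ 0} ⊆ {i | B.mulVec g i ≠ 0} →
      {i | B.mulVec g i ≠ 0} ⊆ {i | B.mulVec y i ≠ 0}}

/-- A face of a polyhedron `P`: either `P` itself or the set of maximizers of a linear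
functional over `P` whose supremum is finite and attained. -/
def IsFace {n : Type*} [Fintype n] (P F : Set (n → ℝ)) : Prop :=
  F = P ∨ ∃ (c : n → ℝ) (s : ℝ),
    (∀ y ∈ P, c ⬝ᵥ y ≤ s) ∧ (∃ y ∈ P, c ⬝ᵥ y = s) ∧ F = {x ∈ P | c ⬝ᵥ x = s}

/-- The dimension of the affine span of a set. -/
def spanDim {n : Type*} [Fintype n] (S : Set (n → ℝ)) : ℕ :=
  Module.finrank ℝ (affineSpan ℝ S).direction

def IsVertex {n : Type*} [Fintype n] (P : Set (n → ℝ)) (v : n → ℝ) : Prop :=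
  IsFace P {v}

def IsEdge {n : Type*} [Fintype n] (P F : Set (n → ℝ)) : Prop :=
  IsFace P F ∧ spanDim F = 1

/-- A nonzero vector lying in the direction space of the affine span of some edge of `P`. -/
def IsEdgeDirection {n : Type*} [Fintype n] (P : Set (n → ℝ)) (g : n → ℝ) : Prop :=
  g ≠ 0 ∧ ∃ F, IsEdge P F ∧ g ∈ (affineSpan ℝ F).direction

/-- A facet: a face whose affine span has dimension `dim P - 1`. -/
def IsFacet {n : Type*} [Fintype n] (P F : Set (n → ℝ)) : Prop :=
  IsFace P F ∧ spanDim F + 1 = spanDim P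

/-- A pointed set: contains no affine line. -/
def PointedSet {n : Type*} [Fintype n] (P : Set (n → ℝ)) : Prop :=
  ∀ x v : n → ℝ, (∀ t : ℝ, x + t • v ∈ P) → v = 0

/-- `Ax = b, Bx ≤ d` is an irredundant description of `P`. -/
def Irredundant {p q n : Type*} [Fintype n] (A : Matrix p n ℝ) (b : p → ℝ)
    (B : Matrix q n ℝ) (d : q → ℝ) (P : Set (n → ℝ)) : Prop :=
  P = polySet A b B d ∧
  {x | A.mulVec x = b} = (affineSpan ℝ P : Set (n → ℝ)) ∧
  ∀ i, IsFacet P {x ∈ P | B.mulVec x i = d i}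

/-- A basic solution of the system `Ax = b, Bx ≤ d`: satisfies the equalities, and the rows of
`A` together with the tight rows of `B` span the whole space. -/
def IsBasicSolution {p q n : Type*} [Fintype n] (A : Matrix p n ℝ) (b : p → ℝ)
    (B : Matrix q n ℝ) (d : q → ℝ) (g : n → ℝ) : Prop :=
  A.mulVec g = b ∧
  Submodule.span ℝ (Set.range (fun i => A i) ∪
    (fun i => B i) '' {i | B.mulVec g i = d i}) = ⊤

/-!
If `g` is a direction of an edge `F` of `P = π(Q)`, then `F` contains images of two points `X ≠ Y`
of `Q` with `π(X - Y)` a nonzero multiple of `g`. Among the vectors supported in the support of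
`X - Y` and not killed by `π`, one of minimal support is a circuit of `Q`, and it must map to a
multiple of `g`, since the midpoint of `X` and `Y` can be moved along it in both directions.

Conversely, suppose the circuit `g` of `P` is not an edge direction. Then `P = conv V + cone R`
with no ray in `R` parallel to `g`. Each group of points of `V` on a common line parallel to `g`
lies in a segment of `P` which, not being contained in an edge, is the diagonal of a thin
parallelogram in `P` with sides not parallel to `g`. If the parallelograms are thin enough, no
line parallel to `g` meets two of them. Now `P` is a projection of a join of squares with an
orthant, the squares mapping onto the parallelograms and the rays of the orthant onto `R`. Up to
scaling, the circuits of this join are the rays, the sides of the squares and the differences of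
corners of distinct squares, and none of them maps to a multiple of `g`.
-/

open Filter Topology

lemma exists_pos_and_neg_of_eventually {s : ℝ → Prop} (h : ∀ᶠ ε in 𝓝 0, s ε) :
    ∃ ε > 0, s ε ∧ s (-ε) := by
  have hneg : ∀ᶠ ε in 𝓝 (0 : ℝ), s (-ε) := (continuous_neg.tendsto' 0 0 neg_zero).eventually h
  obtain ⟨ε, hε, hpos⟩ := (((h.and hneg).filter_mono nhdsWithin_le_nhds).and
    (self_mem_nhdsWithin : ∀ᶠ ε in 𝓝[>] (0 : ℝ), 0 < ε)).exists
  exact ⟨ε, hpos, hε⟩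

section Polyhedra

variable {p q n : Type*} [Fintype n] {A : Matrix p n ℝ} {b : p → ℝ} {B : Matrix q n ℝ} {d : q → ℝ}

lemma convex_polySet (A : Matrix p n ℝ) (b : p → ℝ) (B : Matrix q n ℝ) (d : q → ℝ) :
    Convex ℝ (polySet A b B d) :=
  ((convex_singleton b).linear_preimage A.mulVecLin).inter
    ((convex_Iic d).linear_preimage B.mulVecLin)

lemma mulVec_sub_eq_zero_of_mem_polySet {x y : n → ℝ} (hx : x ∈ polySet A b B d)
    (hy : y ∈ polySet A b B d) : A *ᵥ (x - y) = 0 := by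
  rw [mulVec_sub, hx.1, hy.1, sub_self]

lemma add_smul_mem_polySet {x u : n → ℝ} {ε : ℝ} (hx : x ∈ polySet A b B d) (hAu : A *ᵥ u = 0)
    (hBu : ∀ i, (B *ᵥ x) i + ε * (B *ᵥ u) i ≤ d i) : x + ε • u ∈ polySet A b B d := by
  refine ⟨by rw [mulVec_add, mulVec_smul, hAu, smul_zero, add_zero, hx.1], ?_⟩
  rw [mulVec_add, mulVec_smul]
  exact hBu

lemma eventually_add_smul_mem_polySet [Finite q] {x u : n → ℝ} (hx : x ∈ polySet A b B d)
    (hAu : A *ᵥ u = 0) (hBu : ∀ i, (B *ᵥ x) i = d i → (B *ᵥ u) i = 0) :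
    ∀ᶠ ε : ℝ in 𝓝 0, x + ε • u ∈ polySet A b B d := by
  have hrow (i : q) : ∀ᶠ ε : ℝ in 𝓝 0, (B *ᵥ x) i + ε * (B *ᵥ u) i ≤ d i := by
    rcases (hx.2 i).eq_or_lt with htight | hslack
    · simp [htight, hBu i htight]
    · have hcont : Tendsto (fun ε : ℝ => (B *ᵥ x) i + ε * (B *ᵥ u) i) (𝓝 0) (𝓝 ((B *ᵥ x) i)) :=
        Continuous.tendsto' (by fun_prop) _ _ (by simp)
      exact (hcont.eventually_lt_const hslack).mono fun _ => le_of_lt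
  filter_upwards [eventually_all.2 hrow] with ε hε
  exact add_smul_mem_polySet hx hAu hε

lemma eq_zero_of_pointedSet_polySet (hpt : PointedSet (polySet A b B d)) {x v : n → ℝ}
    (hx : x ∈ polySet A b B d) (hAv : A *ᵥ v = 0) (hBv : B *ᵥ v = 0) : v = 0 :=
  hpt x v fun t => add_smul_mem_polySet hx hAv fun i => by simpa [hBv] using hx.2 i

lemma mulVec_eq_of_midpoint_tight {x y : n → ℝ} (hx : x ∈ polySet A b B d)
    (hy : y ∈ polySet A b B d) {i : q} (hi : (B *ᵥ midpoint ℝ x y) i = d i) :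
    (B *ᵥ x) i = d i := by
  simp only [midpoint_eq_smul_add, invOf_eq_inv, mulVec_smul, mulVec_add, Pi.smul_apply,
    Pi.add_apply, smul_eq_mul] at hi
  linarith [hx.2 i, hy.2 i]

end Polyhedra

section Circuits

variable {p q n : Type*} [Fintype n] {A : Matrix p n ℝ} {B : Matrix q n ℝ}

lemma smul_mem_circuits {g : n → ℝ} (hg : g ∈ circuits A B) {c : ℝ} (hc : c ≠ 0) :
    c • g ∈ circuits A B := by
  obtain ⟨hAg, hg0, hmin⟩ := hg
  refine ⟨by rw [mulVec_smul, hAg, smul_zero], smul_ne_zero hc hg0, fun y hAy hy0 hsub => ?_⟩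
  simp only [mulVec_smul, Pi.smul_apply, smul_eq_mul, ne_eq, mul_eq_zero, hc, false_or]
    at hsub ⊢
  exact hmin y hAy hy0 hsub

lemma mulVec_eq_zero_or_eq_smul_of_mem_circuits {g y : n → ℝ} (hg : g ∈ circuits A B)
    (hAy : A *ᵥ y = 0) (hsub : ∀ i, (B *ᵥ g) i = 0 → (B *ᵥ y) i = 0) :
    B *ᵥ y = 0 ∨ ∃ c : ℝ, y = c • g := by
  by_contra! ⟨hBy, hne⟩
  obtain ⟨i, hyi⟩ := Function.ne_iff.1 hBy
  have hgi : (B *ᵥ g) i ≠ 0 := mt (hsub i) hyi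
  set u := y - ((B *ᵥ y) i / (B *ᵥ g) i) • g with hu
  have hBu (k : q) : (B *ᵥ u) k = (B *ᵥ y) k - (B *ᵥ y) i / (B *ᵥ g) i * (B *ᵥ g) k := by
    simp [hu, mulVec_sub, mulVec_smul]
  refine hg.2.2 u (by rw [hu, mulVec_sub, mulVec_smul, hAy, hg.1, smul_zero, sub_zero])
    (sub_ne_zero.2 (hne _)) (fun k hk hgk => hk ?_) hgi ?_
  · rw [hBu, hgk, hsub k hgk, mul_zero, sub_zero]
  · rw [hBu, div_mul_cancel₀ _ hgi, sub_self]

lemma exists_mem_circuits_map_ne_zero [Finite q] {E : Type*} [AddCommGroup E] [Module ℝ E]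
    (hinj : ∀ v, A *ᵥ v = 0 → B *ᵥ v = 0 → v = 0) (ψ : (n → ℝ) →ₗ[ℝ] E) {u : n → ℝ}
    (hAu : A *ᵥ u = 0) (hψu : ψ u ≠ 0) :
    ∃ w ∈ circuits A B, ψ w ≠ 0 ∧ ∀ i, (B *ᵥ u) i = 0 → (B *ᵥ w) i = 0 := by
  let supports : Set (Set q) := (fun v => Function.support (B *ᵥ v)) '' {v | A *ᵥ v = 0 ∧ ψ v ≠ 0}
  obtain ⟨_, hsub, ⟨w, ⟨hAw, hψw⟩, rfl⟩, hmin⟩ :=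
    (Set.toFinite supports).exists_le_minimal ⟨u, ⟨hAu, hψu⟩, rfl⟩
  have hminimal (v : n → ℝ) (hAv : A *ᵥ v = 0) (hψv : ψ v ≠ 0)
      (hv : Function.support (B *ᵥ v) ⊆ Function.support (B *ᵥ w)) :
      Function.support (B *ᵥ w) ⊆ Function.support (B *ᵥ v) := hmin ⟨v, ⟨hAv, hψv⟩, rfl⟩ hv
  refine ⟨w, ⟨hAw, by rintro rfl; exact hψw (map_zero ψ), fun y hAy hy0 hyw => ?_⟩, hψw,
    fun i hi => by_contra fun hwi => hsub hwi hi⟩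
  refine hminimal y hAy (fun hψy => ?_) hyw
  obtain ⟨i, hyi⟩ := Function.ne_iff.1 (mt (hinj y hAy) hy0)
  set v := w - ((B *ᵥ w) i / (B *ᵥ y) i) • y with hv
  have hBv (k : q) : (B *ᵥ v) k = (B *ᵥ w) k - (B *ᵥ w) i / (B *ᵥ y) i * (B *ᵥ y) k := by
    simp [hv, mulVec_sub, mulVec_smul]
  refine hminimal v (by rw [hv, mulVec_sub, mulVec_smul, hAw, hAy, smul_zero, sub_zero])
    (by simpa [hv, hψy] using hψw) (fun k hk hwk => hk ?_) (hyw hyi) ?_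
  · have hyk : (B *ᵥ y) k = 0 := by_contra fun hyk => hyw hyk hwk
    rw [hBv, hwk, hyk, mul_zero, sub_zero]
  · rw [hBv, div_mul_cancel₀ _ hyi, sub_self]

end Circuits

section Edges

variable {p q n : Type*} [Fintype n] {A : Matrix p n ℝ} {b : p → ℝ} {B : Matrix q n ℝ} {d : q → ℝ}

/-- The points of `{x : Ax = b, Bx ≤ d}` at which every inequality indexed by `I` is tight. -/
def tightFace (A : Matrix p n ℝ) (b : p → ℝ) (B : Matrix q n ℝ) (d : q → ℝ) (I : Set q) :
    Set (n → ℝ) :=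
  {x ∈ polySet A b B d | ∀ i ∈ I, (B *ᵥ x) i = d i}

lemma isFace_tightFace [Finite q] {I : Set q} (hne : (tightFace A b B d I).Nonempty) :
    IsFace (polySet A b B d) (tightFace A b B d I) := by
  classical
  have := Fintype.ofFinite q
  let rows : Finset q := {i | i ∈ I}
  have hc (y : n → ℝ) : (∑ i ∈ rows, B i) ⬝ᵥ y = ∑ i ∈ rows, (B *ᵥ y) i := sum_dotProduct ..
  have htight {y : n → ℝ} (hy : y ∈ polySet A b B d) :
      (∑ i ∈ rows, B i) ⬝ᵥ y = ∑ i ∈ rows, d i ↔ ∀ i ∈ I, (B *ᵥ y) i = d i := by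
    rw [hc, Finset.sum_eq_sum_iff_of_le fun i _ => hy.2 i]
    simp [rows]
  obtain ⟨x, hx, hxI⟩ := hne
  refine Or.inr ⟨∑ i ∈ rows, B i, ∑ i ∈ rows, d i, fun y hy => ?_, ⟨x, hx, (htight hx).2 hxI⟩,
    Set.ext fun y => and_congr_right fun hy => (htight hy).symm⟩
  rw [hc]
  exact Finset.sum_le_sum fun i _ => hy.2 i

lemma isEdgeDirection_of_tightFace [Finite q] {I : Set q} {x y g : n → ℝ} {δ : ℝ} (hg : g ≠ 0)
    (hδ : δ ≠ 0) (hx : x ∈ tightFace A b B d I) (hy : y ∈ tightFace A b B d I)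
    (hxy : y - x = δ • g)
    (hker : ∀ u, A *ᵥ u = 0 → (∀ i ∈ I, (B *ᵥ u) i = 0) → ∃ c : ℝ, u = c • g) :
    IsEdgeDirection (polySet A b B d) g := by
  have hdir : (affineSpan ℝ (tightFace A b B d I)).direction = ℝ ∙ g := by
    rw [direction_affineSpan]
    apply le_antisymm
    · rw [vectorSpan_def, Submodule.span_le]
      rintro _ ⟨v, hv, w, hw, rfl⟩
      obtain ⟨c, hc⟩ := hker (v - w) (mulVec_sub_eq_zero_of_mem_polySet hv.1 hw.1) fun i hi => by
        rw [mulVec_sub, Pi.sub_apply, hv.2 i hi, hw.2 i hi, sub_self]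
      exact Submodule.mem_span_singleton.2 ⟨c, hc.symm⟩
    · rw [Submodule.span_singleton_le_iff_mem, ← Submodule.smul_mem_iff _ hδ, ← hxy]
      exact vsub_mem_vectorSpan ℝ hy hx
  refine ⟨hg, _, ⟨isFace_tightFace ⟨x, hx⟩, ?_⟩, hdir ▸ Submodule.mem_span_singleton_self g⟩
  rw [spanDim, hdir, finrank_span_singleton hg]

lemma IsEdgeDirection.exists_isFace {P : Set (n → ℝ)} {g : n → ℝ} (h : IsEdgeDirection P g) :
    ∃ F, IsFace P F ∧ (∀ x ∈ F, ∀ y ∈ F, ∃ c : ℝ, x - y = c • g) ∧ F.Nontrivial := by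
  obtain ⟨hg, F, ⟨hF, hdim⟩, hgF⟩ := h
  refine ⟨F, hF, fun x hx y hy => ?_, Set.not_subsingleton_iff.1 fun hsub => hg ?_⟩
  · have hxy : x - y ∈ (affineSpan ℝ F).direction :=
      AffineSubspace.vsub_mem_direction (mem_affineSpan ℝ hx) (mem_affineSpan ℝ hy)
    obtain ⟨c, hc⟩ := (finrank_eq_one_iff_of_nonzero'
      (⟨g, hgF⟩ : (affineSpan ℝ F).direction) (by simpa using hg)).1 hdim ⟨_, hxy⟩
    exact ⟨c, congrArg Subtype.val hc.symm⟩
  · simpa [direction_affineSpan, vectorSpan_of_subsingleton ℝ hsub] using hgF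

lemma IsFace.mem_of_midpoint_mem {P F : Set (n → ℝ)} (hF : IsFace P F) {x y : n → ℝ}
    (hx : x ∈ P) (hy : y ∈ P) (hxy : midpoint ℝ x y ∈ F) : x ∈ F := by
  rcases hF with rfl | ⟨c, s, hle, -, rfl⟩
  · exact hx
  · have hmid : c ⬝ᵥ midpoint ℝ x y = s := hxy.2
    simp only [midpoint_eq_smul_add, invOf_eq_inv, dotProduct_smul, dotProduct_add,
      smul_eq_mul] at hmid
    exact ⟨hx, by linarith [hle x hx, hle y hy]⟩

lemma IsFace.convex {P F : Set (n → ℝ)} (hF : IsFace P F) (hP : Convex ℝ P) : Convex ℝ F := by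
  rcases hF with rfl | ⟨c, s, -, -, rfl⟩
  · exact hP
  · exact hP.inter ((convex_singleton s).linear_preimage (dotProductBilin ℝ ℝ c))

lemma exists_transversal_of_not_isEdgeDirection [Finite q] {x y g : n → ℝ} {δ : ℝ} (hg : g ≠ 0)
    (hδ : δ ≠ 0) (hx : x ∈ polySet A b B d) (hy : y ∈ polySet A b B d) (hxy : y - x = δ • g)
    (hedge : ¬ IsEdgeDirection (polySet A b B d) g) :
    ∃ u : n → ℝ, (∀ c : ℝ, u ≠ c • g) ∧
      ∀ᶠ ε : ℝ in 𝓝 0, midpoint ℝ x y + ε • u ∈ polySet A b B d := by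
  have hmid : midpoint ℝ x y ∈ polySet A b B d := (convex_polySet A b B d).midpoint_mem hx hy
  let I : Set q := {i | (B *ᵥ midpoint ℝ x y) i = d i}
  by_contra hcon
  refine hedge (isEdgeDirection_of_tightFace (I := I) hg hδ
    ⟨hx, fun i hi => mulVec_eq_of_midpoint_tight hx hy hi⟩
    ⟨hy, fun i hi => mulVec_eq_of_midpoint_tight hy hx (by rwa [midpoint_comm])⟩ hxy
    fun u hAu hBu => ?_)
  by_contra! hu
  exact hcon ⟨u, hu, eventually_add_smul_mem_polySet hmid hAu hBu⟩

end Edges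

section Forward

variable {n : Type*} [Fintype n]

/-- The midpoint of `X` and `Y` can be moved along both `u` and `-u` inside the polyhedron, and its
image cannot leave the face `F`. -/
lemma exists_map_eq_smul_of_tight {m p q : Type*} [Fintype m] [Finite q] {A : Matrix p m ℝ}
    {b : p → ℝ} {B : Matrix q m ℝ} {d : q → ℝ} {π : (m → ℝ) →ₗ[ℝ] (n → ℝ)} {F : Set (n → ℝ)}
    {g : n → ℝ} (hF : IsFace (π '' polySet A b B d) F)
    (hFg : ∀ x ∈ F, ∀ y ∈ F, ∃ c : ℝ, x - y = c • g) {X Y u : m → ℝ} (hX : X ∈ polySet A b B d)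
    (hY : Y ∈ polySet A b B d) (hπX : π X ∈ F) (hπY : π Y ∈ F) (hAu : A *ᵥ u = 0)
    (hBu : ∀ i, (B *ᵥ (X - Y)) i = 0 → (B *ᵥ u) i = 0) : ∃ c : ℝ, π u = c • g := by
  have hconv := convex_polySet A b B d
  let M := midpoint ℝ X Y
  have hπM : π M ∈ F := by
    rw [show π M = midpoint ℝ (π X) (π Y) from π.toAffineMap.map_midpoint X Y]
    exact (hF.convex (hconv.linear_image π)).midpoint_mem hπX hπY
  have hmove : ∀ᶠ ε : ℝ in 𝓝 0, M + ε • u ∈ polySet A b B d := by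
    refine eventually_add_smul_mem_polySet (hconv.midpoint_mem hX hY) hAu fun i hi => hBu i ?_
    rw [mulVec_sub, Pi.sub_apply, mulVec_eq_of_midpoint_tight hX hY hi,
      mulVec_eq_of_midpoint_tight hY hX (by rwa [midpoint_comm]), sub_self]
  obtain ⟨ε, hε, hplus, hminus⟩ := exists_pos_and_neg_of_eventually hmove
  have hmid : midpoint ℝ (π (M + ε • u)) (π (M + (-ε) • u)) = π M := by
    simp only [map_add, map_smul, midpoint_eq_smul_add, invOf_eq_inv]
    module
  have hmem : π (M + ε • u) ∈ F :=
    hF.mem_of_midpoint_mem ⟨_, hplus, rfl⟩ ⟨_, hminus, rfl⟩ (hmid ▸ hπM)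
  obtain ⟨c, hc⟩ := hFg _ hmem _ hπM
  refine ⟨ε⁻¹ * c, ?_⟩
  rw [mul_smul, ← hc, map_add, add_sub_cancel_left, map_smul, inv_smul_smul₀ hε.ne']

theorem IsEdgeDirection.mem_image_circuits {m p q : Type*} [Fintype m] [Finite q]
    {A : Matrix p m ℝ} {b : p → ℝ} {B : Matrix q m ℝ} {d : q → ℝ} {π : (m → ℝ) →ₗ[ℝ] (n → ℝ)}
    {g : n → ℝ} (hg : IsEdgeDirection (π '' polySet A b B d) g)
    (hpt : PointedSet (polySet A b B d)) : g ∈ π '' circuits A B := by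
  obtain ⟨F, hF, hFg, x, hx, y, hy, hxy⟩ := hg.exists_isFace
  have hFsub : F ⊆ π '' polySet A b B d := by
    rcases hF with rfl | ⟨_, _, -, -, rfl⟩
    exacts [subset_rfl, Set.sep_subset _ _]
  obtain ⟨X, hX, rfl⟩ := hFsub hx
  obtain ⟨Y, hY, rfl⟩ := hFsub hy
  obtain ⟨w, hw, hπw, hsub⟩ := exists_mem_circuits_map_ne_zero
    (fun v => eq_zero_of_pointedSet_polySet hpt hX) π (mulVec_sub_eq_zero_of_mem_polySet hX hY)
    (by rwa [map_sub, sub_ne_zero])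
  obtain ⟨c, hc⟩ := exists_map_eq_smul_of_tight hF hFg hX hY hx hy hw.1 hsub
  have hc0 : c ≠ 0 := by
    rintro rfl
    exact hπw (by rw [hc, zero_smul])
  exact ⟨c⁻¹ • w, smul_mem_circuits hw (inv_ne_zero hc0), by rw [map_smul, hc, inv_smul_smul₀ hc0]⟩

end Forward

section Recession

variable {p q n : Type*} [Fintype n] {A : Matrix p n ℝ} {b : p → ℝ} {B : Matrix q n ℝ} {d : q → ℝ}

lemma exists_add_smul_mem_polySet_tight [Finite q] {x y : n → ℝ} (hx : x ∈ polySet A b B d)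
    (hAy : A *ᵥ y = 0) {k : q} (hk : 0 < (B *ᵥ y) k) :
    ∃ ε : ℝ, x + ε • y ∈ polySet A b B d ∧ ∃ i, (B *ᵥ y) i ≠ 0 ∧ (B *ᵥ (x + ε • y)) i = d i := by
  obtain ⟨i, hi, hmin⟩ := Set.exists_min_image {i | 0 < (B *ᵥ y) i}
    (fun i => (d i - (B *ᵥ x) i) / (B *ᵥ y) i) (Set.toFinite _) ⟨k, hk⟩
  have hi' : 0 < (B *ᵥ y) i := hi
  refine ⟨(d i - (B *ᵥ x) i) / (B *ᵥ y) i, add_smul_mem_polySet hx hAy fun j => ?_, i, hi'.ne', ?_⟩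
  · rcases le_or_gt ((B *ᵥ y) j) 0 with hj | hj
    · have hratio : 0 ≤ (d i - (B *ᵥ x) i) / (B *ᵥ y) i :=
        div_nonneg (sub_nonneg.2 (hx.2 i)) hi'.le
      linarith [hx.2 j, mul_nonpos_of_nonneg_of_nonpos hratio hj]
    · linarith [(le_div_iff₀ hj).1 (hmin j hj)]
  · rw [mulVec_add, mulVec_smul, Pi.add_apply, Pi.smul_apply, smul_eq_mul,
      div_mul_cancel₀ _ hi'.ne']
    ring

lemma exists_mem_polySet_forall_mulVec_eq_zero [Finite q] (hne : (polySet A b B d).Nonempty) :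
    ∃ x ∈ polySet A b B d, ∀ y, A *ᵥ y = 0 → (∀ i, (B *ᵥ x) i = d i → (B *ᵥ y) i = 0) →
      B *ᵥ y = 0 := by
  let tight : (n → ℝ) → Set q := fun x => {i | (B *ᵥ x) i = d i}
  obtain ⟨_, ⟨x, hx, rfl⟩, hmax⟩ :=
    (Set.toFinite (tight '' polySet A b B d)).exists_maximal (hne.image tight)
  have hnonpos (y : n → ℝ) (hAy : A *ᵥ y = 0) (hBy : ∀ i ∈ tight x, (B *ᵥ y) i = 0) (k : q) :
      (B *ᵥ y) k ≤ 0 := by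
    by_contra! hk
    obtain ⟨ε, hmem, i, hyi, hi⟩ := exists_add_smul_mem_polySet_tight hx hAy hk
    refine hyi (hBy i (hmax ⟨_, hmem, rfl⟩ (fun j hj => ?_) hi))
    have hxj : (B *ᵥ x) j = d j := hj
    simp [tight, mulVec_add, mulVec_smul, hxj, hBy j hj]
  refine ⟨x, hx, fun y hAy hBy => funext fun k => (hnonpos y hAy hBy k).antisymm ?_⟩
  simpa [mulVec_neg] using hnonpos (-y) (by rw [mulVec_neg, hAy, neg_zero])
    (fun i hi => by rw [mulVec_neg, Pi.neg_apply, hBy i hi, neg_zero]) k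

lemma exists_forall_add_smul_mem_polySet [Finite q] {x g : n → ℝ} (hAx : A *ᵥ x = b)
    (hAg : A *ᵥ g = 0) (hBg : B *ᵥ g ≤ 0) (hx : ∀ i, (B *ᵥ g) i = 0 → (B *ᵥ x) i ≤ d i) :
    ∃ t : ℝ, ∀ s ≥ t, x + s • g ∈ polySet A b B d := by
  have hrow (i : q) : ∀ᶠ s : ℝ in atTop, (B *ᵥ (x + s • g)) i ≤ d i := by
    simp only [mulVec_add, mulVec_smul, Pi.add_apply, Pi.smul_apply, smul_eq_mul]
    rcases (hBg i).eq_or_lt with hgi | hgi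
    · exact Eventually.of_forall fun s => by simpa [hgi] using hx i hgi
    · exact (tendsto_atBot_add_const_left _ _
        (tendsto_id.atTop_mul_const_of_neg hgi)).eventually_le_atBot _
  obtain ⟨t, ht⟩ := eventually_atTop.1 (eventually_all.2 hrow)
  refine ⟨t, fun s hs => ⟨?_, ht s hs⟩⟩
  rw [mulVec_add, mulVec_smul, hAx, hAg, smul_zero, add_zero]

/-- Go to a minimal face of the polyhedron cut out by the rows constant along `g`, then far along
`g`: without lineality beyond `g`, one arrives at an unbounded edge. -/
lemma exists_lineality_of_not_isEdgeDirection [Finite q] {g : n → ℝ} (hg : g ∈ circuits A B)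
    (hBg : B *ᵥ g ≤ 0) (hne : (polySet A b B d).Nonempty)
    (hedge : ¬ IsEdgeDirection (polySet A b B d) g) :
    ∃ u, A *ᵥ u = 0 ∧ B *ᵥ u = 0 ∧ ∀ c : ℝ, u ≠ c • g := by
  let I : Set q := {i | (B *ᵥ g) i = 0}
  obtain ⟨z, hz⟩ := hne
  obtain ⟨x, hx, hmin⟩ := exists_mem_polySet_forall_mulVec_eq_zero
    (A := A) (b := b) (B := B.submatrix ((↑) : I → q) id) (d := fun i => d i)
    ⟨z, hz.1, fun i => hz.2 i⟩
  obtain ⟨t, ht⟩ := exists_forall_add_smul_mem_polySet hx.1 hg.1 hBg fun i hi => hx.2 ⟨i, hi⟩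
  let J : Set q := {i | i ∈ I ∧ (B *ᵥ x) i = d i}
  have hface {s : ℝ} (hs : t ≤ s) : x + s • g ∈ tightFace A b B d J := by
    refine ⟨ht s hs, fun i hi => ?_⟩
    have hgi : (B *ᵥ g) i = 0 := hi.1
    simp [mulVec_add, mulVec_smul, hgi, hi.2]
  by_contra! hlin
  refine hedge (isEdgeDirection_of_tightFace hg.2.1 one_ne_zero (hface le_rfl)
    (hface (le_add_of_nonneg_right zero_le_one)) (by module) fun u hAu hBu => ?_)
  have hBuI : (B.submatrix ((↑) : I → q) id) *ᵥ u = 0 :=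
    hmin u hAu fun i hi => hBu i ⟨i.2, hi⟩
  exact (mulVec_eq_zero_or_eq_smul_of_mem_circuits hg hAu
    fun i hi => congrFun hBuI ⟨i, hi⟩).elim (hlin u hAu) id

end Recession

section MinkowskiWeyl

variable {𝕜 E : Type*} [Field 𝕜] [LinearOrder 𝕜] [IsStrictOrderedRing 𝕜] [AddCommGroup E]
  [Module 𝕜 E]

open PointedCone

lemma eq_zero_of_mem_hull_of_nonneg {φ : E →ₗ[𝕜] 𝕜} {N : Set E} (hN : ∀ t ∈ N, φ t < 0) {v : E}
    (hv : v ∈ hull 𝕜 N) (hφv : 0 ≤ φ v) : v = 0 := by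
  suffices h : φ v ≤ 0 ∧ (φ v = 0 → v = 0) from h.2 (h.1.antisymm hφv)
  clear hφv
  induction hv using Submodule.span_induction with
  | mem t ht => exact ⟨(hN t ht).le, fun h => absurd h (hN t ht).ne⟩
  | zero => simp
  | add u w _ _ hu hw =>
    rw [map_add]
    exact ⟨add_nonpos hu.1 hw.1, fun h => by
      rw [hu.2 (by linarith [hu.1, hw.1]), hw.2 (by linarith [hu.1, hw.1]), add_zero]⟩
  | smul c w _ hw =>
    obtain ⟨c, hc⟩ := c
    rw [Nonneg.mk_smul, map_smul, smul_eq_mul]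
    refine ⟨mul_nonpos_of_nonneg_of_nonpos hc hw.1, fun h => ?_⟩
    rcases mul_eq_zero.1 h with rfl | h
    exacts [zero_smul 𝕜 w, by rw [hw.2 h, smul_zero]]

/-- The generators of the half-cone `φ ≥ 0` produced by Fourier–Motzkin elimination from
generators of a cone. -/
def fourierMotzkin (φ : E →ₗ[𝕜] 𝕜) (S : Set E) : Set E :=
  {s ∈ S | 0 ≤ φ s} ∪ Set.image2 (fun s t => φ s • t - φ t • s) {s ∈ S | 0 ≤ φ s} {t ∈ S | φ t < 0}

lemma elimination_mem_hull_fourierMotzkin (φ : E →ₗ[𝕜] 𝕜) (S : Set E) {u v : E}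
    (hu : u ∈ hull 𝕜 {s ∈ S | 0 ≤ φ s}) (hv : v ∈ hull 𝕜 {t ∈ S | φ t < 0}) :
    φ u • v - φ v • u ∈ hull 𝕜 (fourierMotzkin φ S) := by
  let elim : E →ₗ[𝕜] E →ₗ[𝕜] E := .lsmul 𝕜 E ∘ₗ φ - (.lsmul 𝕜 E ∘ₗ φ).flip
  have hv' (s : E) (hs : s ∈ {s ∈ S | 0 ≤ φ s}) :
      v ∈ (hull 𝕜 (fourierMotzkin φ S)).comap (elim s) := by
    refine Submodule.span_le.2 (fun t ht => ?_) hv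
    exact subset_hull (Or.inr ⟨s, hs, t, ht, by simp [elim]⟩)
  have hu' : u ∈ (hull 𝕜 (fourierMotzkin φ S)).comap (elim.flip v) :=
    Submodule.span_le.2 (fun s hs => by simpa using hv' s hs) hu
  simpa [elim] using hu'

lemma hull_inf_halfspace (φ : E →ₗ[𝕜] 𝕜) (S : Set E) :
    hull 𝕜 S ⊓ (positive 𝕜 𝕜).comap φ = hull 𝕜 (fourierMotzkin φ S) := by
  apply le_antisymm
  · rintro x ⟨hx, hφx⟩
    have hS : S = {s ∈ S | 0 ≤ φ s} ∪ {t ∈ S | φ t < 0} := by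
      ext s; simp [← and_or_left, le_or_gt]
    rw [SetLike.mem_coe, hull, hS, Submodule.span_union, Submodule.mem_sup] at hx
    obtain ⟨u, hu, v, hv, rfl⟩ := hx
    replace hφx : 0 ≤ φ u + φ v := by simpa using hφx
    have hu' : u ∈ hull 𝕜 (fourierMotzkin φ S) := Submodule.span_mono Set.subset_union_left hu
    have hφu : 0 ≤ φ u := (Submodule.span_le.2 fun s hs => hs.2 :
      hull 𝕜 {s ∈ S | 0 ≤ φ s} ≤ (positive 𝕜 𝕜).comap φ) hu
    rcases hφu.eq_or_lt' with hφu | hφu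
    · rwa [eq_zero_of_mem_hull_of_nonneg (fun t ht => ht.2) hv (by linarith), add_zero]
    · have hsplit : u + v = (φ u)⁻¹ • (φ u • v - φ v • u) + ((φ u)⁻¹ * (φ u + φ v)) • u := by
        match_scalars
        · field_simp
          ring
        · field_simp
      rw [hsplit]
      exact add_mem
        (PointedCone.smul_mem _ (by positivity) (elimination_mem_hull_fourierMotzkin φ S hu hv))
        (PointedCone.smul_mem _ (by positivity) hu')
  · refine Submodule.span_le.2 ?_
    rintro _ (⟨hs, hφs⟩ | ⟨s, ⟨hs, hφs⟩, t, ⟨ht, hφt⟩, rfl⟩)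
    · exact ⟨subset_hull hs, hφs⟩
    · refine ⟨?_, by simp [mul_comm]⟩
      simp only [sub_eq_add_neg, ← neg_smul]
      exact add_mem (PointedCone.smul_mem _ hφs (subset_hull ht))
        (PointedCone.smul_mem _ (neg_nonneg.2 hφt.le) (subset_hull hs))

lemma fg_inf_halfspace {C : PointedCone 𝕜 E} (hC : C.FG) (φ : E →ₗ[𝕜] 𝕜) :
    (C ⊓ (positive 𝕜 𝕜).comap φ).FG := by
  obtain ⟨S, hS, rfl⟩ := Submodule.fg_def.1 hC
  rw [← hull, hull_inf_halfspace]
  exact Submodule.fg_span ((hS.sep _).union ((hS.sep _).image2 _ (hS.sep _)))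

lemma pointedCone_top_fg [Module.Finite 𝕜 E] : (⊤ : PointedCone 𝕜 E).FG := by
  have : Module.Finite {c : 𝕜 // 0 ≤ c} 𝕜 := by
    refine ⟨⟨{1, -1}, eq_top_iff.2 fun x _ => ?_⟩⟩
    rcases le_total 0 x with hx | hx
    · simpa using PointedCone.smul_mem _ hx
        (subset_hull (show (1 : 𝕜) ∈ (({1, -1} : Finset 𝕜) : Set 𝕜) by simp))
    · simpa using PointedCone.smul_mem _ (neg_nonneg.2 hx)
        (subset_hull (show (-1 : 𝕜) ∈ (({1, -1} : Finset 𝕜) : Set 𝕜) by simp))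
  exact (Module.Finite.trans 𝕜 E : Module.Finite {c : 𝕜 // 0 ≤ c} E).fg_top

theorem fg_of_dualFG [Module.Finite 𝕜 E] {M : Type*} [AddCommGroup M] [Module 𝕜 M]
    {p : M →ₗ[𝕜] E →ₗ[𝕜] 𝕜} {C : PointedCone 𝕜 E} (hC : C.DualFG p) : C.FG := by
  classical
  obtain ⟨s, rfl⟩ := hC
  induction s using Finset.induction_on with
  | empty => simpa using pointedCone_top_fg
  | insert x s _ ih =>
    rw [Finset.coe_insert, dual_insert, inf_comm, dual_singleton]
    exact fg_inf_halfspace ih (p x)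

end MinkowskiWeyl

section Homogenization

variable {p q n : Type*} [Fintype n] {A : Matrix p n ℝ} {b : p → ℝ} {B : Matrix q n ℝ} {d : q → ℝ}

open PointedCone

/-- The recession directions of `{x : Ax = b, Bx ≤ d}`. -/
def recessionCone (A : Matrix p n ℝ) (B : Matrix q n ℝ) : Set (n → ℝ) :=
  {r | A *ᵥ r = 0 ∧ B *ᵥ r ≤ 0}

/-- The cone `{(x, t) : Ax = tb, Bx ≤ td, t ≥ 0}` over `{x : Ax = b, Bx ≤ d}`: its slice at height
`1` is the polyhedron, its slice at height `0` the recession cone. -/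
def homogenization (A : Matrix p n ℝ) (b : p → ℝ) (B : Matrix q n ℝ) (d : q → ℝ) :
    PointedCone ℝ ((n → ℝ) × ℝ) where
  carrier := {x | A *ᵥ x.1 = x.2 • b ∧ B *ᵥ x.1 ≤ x.2 • d ∧ 0 ≤ x.2}
  zero_mem' := by simp
  add_mem' := by
    rintro x y ⟨hxA, hxB, hx⟩ ⟨hyA, hyB, hy⟩
    refine ⟨?_, ?_, add_nonneg hx hy⟩
    · rw [Prod.fst_add, Prod.snd_add, mulVec_add, add_smul, hxA, hyA]
    · rw [Prod.fst_add, Prod.snd_add, mulVec_add, add_smul]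
      exact add_le_add hxB hyB
  smul_mem' := by
    rintro ⟨c, hc⟩ x ⟨hxA, hxB, hx⟩
    refine ⟨?_, ?_, mul_nonneg hc hx⟩
    · simp only [Nonneg.mk_smul, Prod.smul_fst, Prod.smul_snd, mulVec_smul, hxA, smul_assoc]
    · simp only [Nonneg.mk_smul, Prod.smul_fst, Prod.smul_snd, mulVec_smul, smul_assoc]
      exact smul_le_smul_of_nonneg_left hxB hc

lemma mk_mem_homogenization {x : n → ℝ} {t : ℝ} :
    (x, t) ∈ homogenization A b B d ↔ A *ᵥ x = t • b ∧ B *ᵥ x ≤ t • d ∧ 0 ≤ t :=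
  Iff.rfl

lemma mk_one_mem_homogenization {x : n → ℝ} :
    (x, (1 : ℝ)) ∈ homogenization A b B d ↔ x ∈ polySet A b B d := by
  simp [mk_mem_homogenization, polySet]

lemma mk_zero_mem_homogenization {r : n → ℝ} :
    (r, (0 : ℝ)) ∈ homogenization A b B d ↔ r ∈ recessionCone A B := by
  simp [mk_mem_homogenization, recessionCone]

lemma dualFG_homogenization [Finite p] [Finite q] :
    (homogenization A b B d).DualFG (.id : Module.Dual ℝ ((n → ℝ) × ℝ) →ₗ[ℝ] _) := by
  let rowA (i : p) : Module.Dual ℝ ((n → ℝ) × ℝ) :=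
    (LinearMap.proj i ∘ₗ A.mulVecLin).coprod (.toSpanSingleton ℝ ℝ (-b i))
  let rowB (i : q) : Module.Dual ℝ ((n → ℝ) × ℝ) :=
    (-LinearMap.proj i ∘ₗ B.mulVecLin).coprod (.toSpanSingleton ℝ ℝ (d i))
  let rows : Set (Module.Dual ℝ ((n → ℝ) × ℝ)) :=
    insert (LinearMap.snd ℝ (n → ℝ) ℝ) ((Set.range (-rowA) ∪ Set.range rowA) ∪ Set.range rowB)
  have hmem (x : n → ℝ) (t : ℝ) : (x, t) ∈ PointedCone.dual .id rows ↔
      0 ≤ t ∧ (A *ᵥ x ≤ t • b ∧ t • b ≤ A *ᵥ x) ∧ B *ᵥ x ≤ t • d := by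
    simp [rows, or_imp, forall_and, rowA, rowB, Pi.le_def]
  have heq : homogenization A b B d = PointedCone.dual .id rows := by
    ext ⟨x, t⟩
    rw [hmem, mk_mem_homogenization, le_antisymm_iff, and_rotate, and_rotate]
  rw [heq]
  exact DualFG.dual_of_finite _ ((((Set.finite_range _).union (Set.finite_range _)).union
    (Set.finite_range _)).insert _)

lemma homogenization_eq_hull {G : Set (n → ℝ)} (hG : G ⊆ recessionCone A B)
    (hGhull : recessionCone A B ⊆ hull ℝ G) :
    homogenization A b B d = hull ℝ (polySet A b B d ×ˢ {1} ∪ G ×ˢ {0}) := by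
  apply le_antisymm
  · rintro ⟨x, t⟩ hx
    rcases (show 0 ≤ t from hx.2.2).eq_or_lt with rfl | ht
    · have hcomap : hull ℝ G ≤ (hull ℝ (polySet A b B d ×ˢ {1} ∪ G ×ˢ {0})).comap
          (LinearMap.inl ℝ (n → ℝ) ℝ) :=
        Submodule.span_le.2 fun r hr => subset_hull (Or.inr ⟨hr, rfl⟩)
      exact hcomap (hGhull (mk_zero_mem_homogenization.1 hx))
    · have hslice : t⁻¹ • x ∈ polySet A b B d := by
        rw [← mk_one_mem_homogenization]
        simpa [ht.ne'] using PointedCone.smul_mem _ (inv_nonneg.2 ht.le) hx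
      have hmem : (t⁻¹ • x, (1 : ℝ)) ∈ hull ℝ (polySet A b B d ×ˢ {1} ∪ G ×ˢ {0}) :=
        subset_hull (Or.inl ⟨hslice, rfl⟩)
      simpa only [Prod.smul_mk, smul_inv_smul₀ ht.ne', smul_eq_mul, mul_one] using
        PointedCone.smul_mem _ ht.le hmem
  · refine Submodule.span_le.2 ?_
    rintro ⟨x, t⟩ (⟨hx, rfl⟩ | ⟨hx, rfl⟩)
    · exact mk_one_mem_homogenization.2 hx
    · exact mk_zero_mem_homogenization.2 (hG hx)

/-- The Minkowski–Weyl decomposition `conv V + cone R`, in homogenized form. -/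
theorem exists_finite_homogenization_le_hull [Finite p] [Finite q] {G : Set (n → ℝ)}
    (hG : G ⊆ recessionCone A B) (hGhull : recessionCone A B ⊆ hull ℝ G) :
    ∃ V ⊆ polySet A b B d, ∃ R ⊆ G, V.Finite ∧ R.Finite ∧
      homogenization A b B d ≤ hull ℝ (V ×ˢ {1} ∪ R ×ˢ {0}) := by
  have hfg : (homogenization A b B d).FG := fg_of_dualFG dualFG_homogenization
  rw [homogenization_eq_hull hG hGhull, hull, Submodule.fg_span_iff_fg_span_finset_subset] at hfg
  obtain ⟨S, hS, hspan⟩ := hfg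
  refine ⟨{x | (x, 1) ∈ S}, fun x hx => ?_, {x | (x, 0) ∈ S}, fun x hx => ?_,
    S.finite_toSet.preimage (Prod.mk_left_injective 1).injOn,
    S.finite_toSet.preimage (Prod.mk_left_injective 0).injOn, ?_⟩
  · simpa using hS hx
  · simpa using hS hx
  · rw [homogenization_eq_hull hG hGhull, hull, hspan]
    refine Submodule.span_mono ?_
    rintro ⟨x, t⟩ hx
    rcases hS hx with ⟨-, rfl⟩ | ⟨-, rfl⟩
    exacts [Or.inl ⟨hx, rfl⟩, Or.inr ⟨hx, rfl⟩]

lemma IsEdgeDirection.of_smul {P : Set (n → ℝ)} {g : n → ℝ} {c : ℝ} (hc : c ≠ 0)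
    (h : IsEdgeDirection P (c • g)) : IsEdgeDirection P g :=
  ⟨(smul_ne_zero_iff.1 h.1).2, h.2.imp fun _ hF => ⟨hF.1, (Submodule.smul_mem_iff _ hc).1 hF.2⟩⟩

lemma smul_smul_add_smul_ne {E : Type*} [AddCommGroup E] [Module ℝ E] {g u : E} (hg : g ≠ 0)
    (hu : ∀ c : ℝ, u ≠ c • g) (α : ℝ) {β : ℝ} (hβ : β ≠ 0) (t : ℝ) :
    t • (α • g + β • u) ≠ g := by
  rintro h
  have ht : t ≠ 0 := by
    rintro rfl
    exact hg (by rw [← h, zero_smul])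
  refine hu (β⁻¹ * (t⁻¹ - α)) ?_
  calc u = β⁻¹ • (t⁻¹ • (t • (α • g + β • u)) - α • g) := by
        rw [inv_smul_smul₀ ht, add_sub_cancel_left, inv_smul_smul₀ hβ]
    _ = (β⁻¹ * (t⁻¹ - α)) • g := by rw [h]; module

lemma recessionCone_subset_hull_not_parallel [Finite q] {g : n → ℝ} (hg : g ∈ circuits A B)
    (hne : (polySet A b B d).Nonempty) (hedge : ¬ IsEdgeDirection (polySet A b B d) g) :
    recessionCone A B ⊆ hull ℝ {r ∈ recessionCone A B | ∀ t : ℝ, t • r ≠ g} := by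
  intro r hr
  by_cases hpar : ∀ t : ℝ, t • r ≠ g
  · exact subset_hull ⟨hr, hpar⟩
  obtain ⟨c, hc, rfl⟩ : ∃ c : ℝ, c ≠ 0 ∧ r = c • g := by
    push Not at hpar
    obtain ⟨t, ht⟩ := hpar
    have ht0 : t ≠ 0 := (smul_ne_zero_iff.1 (ht ▸ hg.2.1)).1
    exact ⟨t⁻¹, inv_ne_zero ht0, by rw [← ht, inv_smul_smul₀ ht0]⟩
  obtain ⟨u, hAu, hBu, hu⟩ := exists_lineality_of_not_isEdgeDirection (smul_mem_circuits hg hc)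
    hr.2 hne fun h => hedge (h.of_smul hc)
  replace hu (k : ℝ) : u ≠ k • g := by simpa [smul_smul, hc] using hu (k * c⁻¹)
  have hplus : c • g + u ∈ recessionCone A B :=
    ⟨by rw [mulVec_add, hr.1, hAu, add_zero], by rw [mulVec_add, hBu, add_zero]; exact hr.2⟩
  have hminus : -u ∈ recessionCone A B :=
    ⟨by rw [mulVec_neg, hAu, neg_zero], by rw [mulVec_neg, hBu, neg_zero]⟩
  rw [← add_neg_cancel_right (c • g) u]
  refine add_mem (subset_hull ⟨hplus, fun t => ?_⟩) (subset_hull ⟨hminus, fun t => ?_⟩)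
  · simpa using smul_smul_add_smul_ne hg.2.1 hu c one_ne_zero t
  · simpa using smul_smul_add_smul_ne hg.2.1 hu 0 (neg_ne_zero.2 one_ne_zero) t

end Homogenization

section Irredundance

variable {p q n : Type*} [Fintype n] {A : Matrix p n ℝ} {b : p → ℝ} {B : Matrix q n ℝ} {d : q → ℝ}

lemma mem_direction_affineSpan_tightFace [Finite q] {I : Set q} {x u : n → ℝ}
    (hx : x ∈ tightFace A b B d I) (hslack : ∀ i ∉ I, (B *ᵥ x) i < d i) :
    u ∈ (affineSpan ℝ (tightFace A b B d I)).direction ↔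
      A *ᵥ u = 0 ∧ ∀ i ∈ I, (B *ᵥ u) i = 0 := by
  let D : Submodule ℝ (n → ℝ) :=
    LinearMap.ker A.mulVecLin ⊓ ⨅ i ∈ I, LinearMap.ker (LinearMap.proj i ∘ₗ B.mulVecLin)
  have hD (v : n → ℝ) : v ∈ D ↔ A *ᵥ v = 0 ∧ ∀ i ∈ I, (B *ᵥ v) i = 0 := by simp [D]
  rw [← hD]
  refine ⟨fun hu => ?_, fun hu => ?_⟩
  · suffices hle : vectorSpan ℝ (tightFace A b B d I) ≤ D by
      rw [direction_affineSpan] at hu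
      exact hle hu
    rw [vectorSpan_def, Submodule.span_le]
    rintro _ ⟨v, hv, w, hw, rfl⟩
    refine (hD _).2 ⟨mulVec_sub_eq_zero_of_mem_polySet hv.1 hw.1, fun i hi => ?_⟩
    simp only [vsub_eq_sub, mulVec_sub, Pi.sub_apply, hv.2 i hi, hw.2 i hi, sub_self]
  · obtain ⟨hAu, hBu⟩ := (hD u).1 hu
    obtain ⟨ε, hε, hmem, -⟩ := exists_pos_and_neg_of_eventually
      (eventually_add_smul_mem_polySet hx.1 hAu fun i hi =>
        hBu i (by_contra fun hiI => (hslack i hiI).ne hi))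
    have hface : x + ε • u ∈ tightFace A b B d I :=
      ⟨hmem, fun i hi => by simp [mulVec_add, mulVec_smul, hBu i hi, hx.2 i hi]⟩
    rw [← Submodule.smul_mem_iff _ hε.ne', ← add_sub_cancel_left x (ε • u), direction_affineSpan]
    exact vsub_mem_vectorSpan ℝ hface hx

lemma tightFace_empty : tightFace A b B d ∅ = polySet A b B d := by
  simp [tightFace]

lemma mem_direction_affineSpan_polySet [Finite q] {x u : n → ℝ}
    (hx : x ∈ polySet A b B d) (hslack : ∀ i, (B *ᵥ x) i < d i) :
    u ∈ (affineSpan ℝ (polySet A b B d)).direction ↔ A *ᵥ u = 0 := by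
  rw [← tightFace_empty] at hx ⊢
  simp [mem_direction_affineSpan_tightFace hx fun i _ => hslack i]

lemma isFacet_tightFace_singleton [Finite q] {i : q} {x₀ x : n → ℝ} (hx₀ : x₀ ∈ polySet A b B d)
    (hslack₀ : ∀ j, (B *ᵥ x₀) j < d j) (hx : x ∈ tightFace A b B d {i})
    (hslack : ∀ j ≠ i, (B *ᵥ x) j < d j) :
    IsFacet (polySet A b B d) (tightFace A b B d {i}) := by
  refine ⟨isFace_tightFace ⟨x, hx⟩, ?_⟩
  let row : Module.Dual ℝ (LinearMap.ker A.mulVecLin) :=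
    (LinearMap.proj i ∘ₗ B.mulVecLin).domRestrict _
  have hrow : row ≠ 0 := fun h => by
    have hzero : (B *ᵥ (x₀ - x)) i = 0 :=
      LinearMap.congr_fun h ⟨x₀ - x, mulVec_sub_eq_zero_of_mem_polySet hx₀ hx.1⟩
    rw [mulVec_sub, Pi.sub_apply, hx.2 i rfl, sub_eq_zero] at hzero
    exact (hslack₀ i).ne hzero
  have hpoly : (affineSpan ℝ (polySet A b B d)).direction = LinearMap.ker A.mulVecLin := by
    ext u
    exact mem_direction_affineSpan_polySet hx₀ hslack₀
  have hfacet : (affineSpan ℝ (tightFace A b B d {i})).direction =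
      (LinearMap.ker row).map (LinearMap.ker A.mulVecLin).subtype := by
    ext u
    rw [mem_direction_affineSpan_tightFace hx hslack]
    simp [row, and_comm]
  rw [spanDim, spanDim, hfacet, hpoly, Submodule.finrank_map_subtype_eq]
  exact Module.Dual.finrank_ker_add_one_of_ne_zero hrow

lemma irredundant_polySet [Finite q] (hslack : ∃ x ∈ polySet A b B d, ∀ j, (B *ᵥ x) j < d j)
    (hfacet : ∀ i, ∃ x ∈ tightFace A b B d {i}, ∀ j ≠ i, (B *ᵥ x) j < d j) :
    Irredundant A b B d (polySet A b B d) := by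
  obtain ⟨x₀, hx₀, hslack₀⟩ := hslack
  refine ⟨rfl, ?_, fun i => ?_⟩
  · ext x
    rw [SetLike.mem_coe, ← AffineSubspace.vsub_right_mem_direction_iff_mem
      (mem_affineSpan ℝ hx₀), mem_direction_affineSpan_polySet hx₀ hslack₀, vsub_eq_sub,
      mulVec_sub, hx₀.1, sub_eq_zero, Set.mem_ofPred_eq]
  · obtain ⟨x, hx, hslack⟩ := hfacet i
    simpa [tightFace] using isFacet_tightFace_singleton hx₀ hslack₀ hx hslack

end Irredundance

section CircuitsLift

/-- The right-hand side of the equivalence: the circuits of `Ax = b, Bx ≤ d` lift to circuits of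
every pointed polyhedron, irredundantly described, that projects onto `P`. -/
def CircuitsLift {p q n : Type*} [Fintype n] (A : Matrix p n ℝ) (B : Matrix q n ℝ)
    (P : Set (n → ℝ)) : Prop :=
  ∀ (m pQ qQ : ℕ) (AQ : Matrix (Fin pQ) (Fin m) ℝ) (bQ : Fin pQ → ℝ)
    (BQ : Matrix (Fin qQ) (Fin m) ℝ) (dQ : Fin qQ → ℝ) (Q : Set (Fin m → ℝ))
    (π : (Fin m → ℝ) →ₗ[ℝ] (n → ℝ)), PointedSet Q → Irredundant AQ bQ BQ dQ Q →
      π '' Q = P → circuits A B ⊆ π '' circuits AQ BQ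

variable {p q n p' q' n' : Type*} [Fintype n] [Fintype n'] {A : Matrix p n ℝ} {b : p → ℝ}
  {B : Matrix q n ℝ} {d : q → ℝ}

lemma mem_polySet_submatrix (e₁ : p' ≃ p) (e₂ : q' ≃ q) (e : n' ≃ n) {x : n' → ℝ} :
    x ∈ polySet (A.submatrix e₁ e) (b ∘ e₁) (B.submatrix e₂ e) (d ∘ e₂) ↔
      x ∘ e.symm ∈ polySet A b B d := by
  simp only [polySet, Set.mem_ofPred_eq, submatrix_mulVec_equiv,
    e₁.surjective.injective_comp_right.eq_iff, Pi.le_def, Function.comp_apply, e₂.surjective.forall]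

lemma comp_symm_mem_circuits (e₁ : p' ≃ p) (e₂ : q' ≃ q) (e : n' ≃ n) {x : n' → ℝ}
    (hx : x ∈ circuits (A.submatrix e₁ e) (B.submatrix e₂ e)) : x ∘ e.symm ∈ circuits A B := by
  obtain ⟨hAx, hx0, hmin⟩ := hx
  simp only [submatrix_mulVec_equiv] at hAx hmin
  refine ⟨e₁.surjective.injective_comp_right hAx,
    fun h => hx0 (e.symm.surjective.injective_comp_right h), fun y hAy hy0 hsub => ?_⟩
  have hye : (y ∘ e) ∘ e.symm = y := by simp [Function.comp_assoc]
  have hlift := hmin (y ∘ e) (by rw [hye, hAy]; rfl)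
    (fun h => hy0 (e.surjective.injective_comp_right h)) (by rw [hye]; exact fun i hi => hsub hi)
  rw [hye] at hlift
  intro i hi
  simpa using hlift (a := e₂.symm i) (by simpa using hi)

lemma pointedSet_submatrix (e₁ : p' ≃ p) (e₂ : q' ≃ q) (e : n' ≃ n)
    (hpt : PointedSet (polySet A b B d)) :
    PointedSet (polySet (A.submatrix e₁ e) (b ∘ e₁) (B.submatrix e₂ e) (d ∘ e₂)) :=
  fun x v hline => e.symm.surjective.injective_comp_right <|
    hpt (x ∘ e.symm) (v ∘ e.symm) fun t => (mem_polySet_submatrix e₁ e₂ e).1 (hline t)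

lemma irredundant_submatrix [Finite q] [Finite q'] (e₁ : p' ≃ p) (e₂ : q' ≃ q) (e : n' ≃ n)
    (hslack : ∃ x ∈ polySet A b B d, ∀ j, (B *ᵥ x) j < d j)
    (hfacet : ∀ i, ∃ x ∈ tightFace A b B d {i}, ∀ j ≠ i, (B *ᵥ x) j < d j) :
    Irredundant (A.submatrix e₁ e) (b ∘ e₁) (B.submatrix e₂ e) (d ∘ e₂)
      (polySet (A.submatrix e₁ e) (b ∘ e₁) (B.submatrix e₂ e) (d ∘ e₂)) := by
  have hcomp (x : n → ℝ) : (x ∘ e) ∘ e.symm = x := by simp [Function.comp_assoc]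
  have hB (x : n → ℝ) (j : q') : (B.submatrix e₂ e *ᵥ (x ∘ e)) j = (B *ᵥ x) (e₂ j) := by
    rw [submatrix_mulVec_equiv, hcomp, Function.comp_apply]
  refine irredundant_polySet ?_ fun i => ?_
  · obtain ⟨x, hx, hlt⟩ := hslack
    exact ⟨x ∘ e, (mem_polySet_submatrix e₁ e₂ e).2 (by rwa [hcomp]), fun j => by
      rw [hB]; exact hlt _⟩
  · obtain ⟨x, ⟨hx, htight⟩, hlt⟩ := hfacet (e₂ i)
    refine ⟨x ∘ e, ⟨(mem_polySet_submatrix e₁ e₂ e).2 (by rwa [hcomp]), ?_⟩, fun j hj => ?_⟩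
    · rintro _ rfl
      rw [hB]
      exact htight _ rfl
    · rw [hB]
      exact hlt _ (e₂.injective.ne hj)

lemma CircuitsLift.subset_image {pP qP nP : Type*} [Fintype nP] {AP : Matrix pP nP ℝ}
    {BP : Matrix qP nP ℝ} {P : Set (nP → ℝ)} [Finite p] [Finite q] (H : CircuitsLift AP BP P)
    (hpt : PointedSet (polySet A b B d))
    (hslack : ∃ x ∈ polySet A b B d, ∀ j, (B *ᵥ x) j < d j)
    (hfacet : ∀ i, ∃ x ∈ tightFace A b B d {i}, ∀ j ≠ i, (B *ᵥ x) j < d j)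
    (π : (n → ℝ) →ₗ[ℝ] (nP → ℝ)) (hπ : π '' polySet A b B d = P) :
    circuits AP BP ⊆ π '' circuits A B := by
  let e₁ := (Finite.equivFin p).symm
  let e₂ := (Finite.equivFin q).symm
  let e := (Fintype.equivFin n).symm
  let T : (Fin (Fintype.card n) → ℝ) ≃ₗ[ℝ] (n → ℝ) := LinearEquiv.funCongrLeft ℝ ℝ e.symm
  have hT (x : n → ℝ) : (x ∘ e) ∘ e.symm = x := by simp [Function.comp_assoc]
  have himage : (π ∘ₗ T.toLinearMap) ''
      polySet (A.submatrix e₁ e) (b ∘ e₁) (B.submatrix e₂ e) (d ∘ e₂) = P := by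
    rw [← hπ, LinearMap.coe_comp, Set.image_comp]
    congr 1
    ext x
    refine ⟨?_, fun hx => ⟨x ∘ e, (mem_polySet_submatrix e₁ e₂ e).2 (by rwa [hT]), hT x⟩⟩
    rintro ⟨y, hy, rfl⟩
    exact (mem_polySet_submatrix e₁ e₂ e).1 hy
  have hirr := irredundant_submatrix e₁ e₂ e hslack hfacet
  intro g hg
  obtain ⟨x, hx, rfl⟩ :=
    H _ _ _ _ _ _ _ _ _ (pointedSet_submatrix e₁ e₂ e hpt) hirr himage hg
  exact ⟨T x, comp_symm_mem_circuits e₁ e₂ e hx, rfl⟩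

end CircuitsLift

section StandardForm

variable {p n : Type*} [Fintype n] [DecidableEq n] {A : Matrix p n ℝ} {b : p → ℝ}

/-- The standard form polyhedron `{x : Ax = b, x ≥ 0}`. -/
abbrev stdPolySet (A : Matrix p n ℝ) (b : p → ℝ) : Set (n → ℝ) :=
  polySet A b (-1 : Matrix n n ℝ) 0

/-- The circuits of the standard form description `Ax = b, x ≥ 0`. -/
abbrev stdCircuits (A : Matrix p n ℝ) : Set (n → ℝ) :=
  circuits A (-1 : Matrix n n ℝ)

lemma mem_stdPolySet {x : n → ℝ} :
    x ∈ stdPolySet A b ↔ A *ᵥ x = b ∧ 0 ≤ x := by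
  simp [polySet, neg_mulVec]

lemma pointedSet_stdPolySet (A : Matrix p n ℝ) (b : p → ℝ) :
    PointedSet (stdPolySet A b) := by
  intro x v hline
  ext i
  by_contra hv
  have hi := (mem_stdPolySet.1 (hline (-(x i + 1) / v i))).2 i
  rw [Pi.add_apply, Pi.smul_apply, smul_eq_mul, div_mul_cancel₀ _ hv, Pi.zero_apply] at hi
  linarith

lemma CircuitsLift.subset_image_std [Finite p] {pP qP nP : Type*} [Fintype nP]
    {AP : Matrix pP nP ℝ} {BP : Matrix qP nP ℝ} {P : Set (nP → ℝ)} (H : CircuitsLift AP BP P)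
    (hpos : ∃ x, A *ᵥ x = b ∧ ∀ i, 0 < x i)
    (hfacet : ∀ i, ∃ x, A *ᵥ x = b ∧ x i = 0 ∧ ∀ j ≠ i, 0 < x j)
    (π : (n → ℝ) →ₗ[ℝ] (nP → ℝ)) (hπ : π '' stdPolySet A b = P) :
    circuits AP BP ⊆ π '' stdCircuits A := by
  refine H.subset_image (pointedSet_stdPolySet A b) ?_ (fun i => ?_) π hπ
  · obtain ⟨x, hx, hpos⟩ := hpos
    exact ⟨x, mem_stdPolySet.2 ⟨hx, fun i => (hpos i).le⟩, by simpa [neg_mulVec]⟩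
  · obtain ⟨x, hx, hxi, hpos⟩ := hfacet i
    refine ⟨x, ⟨mem_stdPolySet.2 ⟨hx, fun j => ?_⟩, ?_⟩, by simpa [neg_mulVec]⟩
    · rcases eq_or_ne j i with rfl | hj
      exacts [hxi.ge, (hpos j hj).le]
    · simp [neg_mulVec, hxi]

lemma exists_smul_eq_of_mem_stdCircuits {x y : n → ℝ}
    (hx : x ∈ stdCircuits A) (hAy : A *ᵥ y = 0) (hy : y ≠ 0)
    (hsub : ∀ i, x i = 0 → y i = 0) : ∃ t : ℝ, t • y = x := by
  rcases mulVec_eq_zero_or_eq_smul_of_mem_circuits hx hAy (by simpa [neg_mulVec] using hsub) with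
    hy0 | ⟨c, rfl⟩
  · exact absurd (by simpa [neg_mulVec] using hy0) hy
  · exact ⟨c⁻¹, inv_smul_smul₀ (left_ne_zero_of_smul hy) x⟩

end StandardForm

section SquareJoin

/-- The index set of the coordinates in a join of squares indexed by `J` with an orthant indexed by
`K`: four coordinates `(j, e, f)` for the `j`-th square, where `e` selects one of two opposite sides
and `f` an endpoint of it, and one coordinate for each `k : K`. -/
abbrev SquareIndex (J K : Type*) := (J × Bool × Bool) ⊕ K

variable {J K : Type*}

/-- The sum of the two coordinates of `z` that belong to the summand `e` of the `j`-th square. -/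
def squareWeight (j : J) (e : Bool) : (SquareIndex J K → ℝ) →ₗ[ℝ] ℝ :=
  LinearMap.proj (.inl (j, e, false)) + LinearMap.proj (.inl (j, e, true))

lemma exists_ne_zero_of_squareWeight_ne_zero {x : SquareIndex J K → ℝ} {j : J} {e : Bool}
    (h : squareWeight j e x ≠ 0) : ∃ f, x (.inl (j, e, f)) ≠ 0 := by
  by_contra! hzero
  exact h (by simp [squareWeight, hzero])

variable [Fintype J] [DecidableEq J] [Fintype K] [DecidableEq K]

/-- The equality constraints of a join of squares with an orthant. The `j`-th square is given by
four nonnegative coordinates `(j, e, f)`, forming two segments `e` of equal weight; row `some j`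
compares these two weights, and row `none` is the total weight. -/
def squareJoin (J K : Type*) [Fintype J] [DecidableEq J] [Fintype K] [DecidableEq K] :
    Matrix (Option J) (SquareIndex J K) ℝ :=
  LinearMap.toMatrix' <| LinearMap.pi fun o =>
    o.elim (∑ j, squareWeight j false) fun j => squareWeight j false - squareWeight j true

lemma squareJoin_mulVec_eq_single_iff {z : SquareIndex J K → ℝ} {t : ℝ} :
    squareJoin J K *ᵥ z = Pi.single none t ↔
      ∑ j, squareWeight j false z = t ∧ ∀ j, squareWeight j false z = squareWeight j true z := by
  simp [squareJoin, LinearMap.toMatrix'_mulVec, funext_iff, Option.forall, sub_eq_zero]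

lemma squareJoin_mulVec_eq_zero_iff {z : SquareIndex J K → ℝ} :
    squareJoin J K *ᵥ z = 0 ↔
      ∑ j, squareWeight j false z = 0 ∧ ∀ j, squareWeight j false z = squareWeight j true z := by
  rw [← squareJoin_mulVec_eq_single_iff, Pi.single_zero]

/-- The corner `(f, f')` of the `j`-th square in a join of squares. -/
def squareCorner (j : J) (f f' : Bool) : SquareIndex J K → ℝ :=
  Pi.single (.inl (j, false, f)) 1 + Pi.single (.inl (j, true, f')) 1

lemma squareJoin_mulVec_squareCorner (j : J) (f f' : Bool) :
    squareJoin J K *ᵥ squareCorner j f f' = Pi.single none 1 := by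
  rw [squareJoin_mulVec_eq_single_iff]
  cases f <;> cases f' <;> simp [squareWeight, squareCorner, Pi.single_apply]

/-- The side `e` of the `j`-th square in a join of squares. -/
def squareSide (j : J) (e : Bool) : SquareIndex J K → ℝ :=
  Pi.single (.inl (j, e, true)) 1 - Pi.single (.inl (j, e, false)) 1

lemma squareJoin_mulVec_squareSide (j : J) (e : Bool) :
    squareJoin J K *ᵥ squareSide j e = 0 := by
  rw [squareJoin_mulVec_eq_zero_iff]
  simp [squareWeight, squareSide, Pi.single_apply]

lemma squareJoin_mulVec_single_inr (k : K) :
    squareJoin J K *ᵥ Pi.single (.inr k) 1 = 0 := by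
  rw [squareJoin_mulVec_eq_zero_iff]
  simp [squareWeight]

lemma squareJoin_mulVec_const (c : ℝ) :
    squareJoin J K *ᵥ (fun _ => c) = Pi.single none (Fintype.card J * (c + c)) := by
  simp [squareJoin_mulVec_eq_single_iff, squareWeight, mul_add]

lemma exists_squareJoin_mulVec_eq_zero_neg_at (i : SquareIndex J K) :
    ∃ u, squareJoin J K *ᵥ u = 0 ∧ u i = -1 ∧ ∀ k ≠ i, 0 ≤ u k := by
  have hsub (i i' k : SquareIndex J K) (hk : k ≠ i') :
      0 ≤ (Pi.single i 1 - Pi.single i' 1 : SquareIndex J K → ℝ) k := by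
    rw [Pi.sub_apply, Pi.single_eq_of_ne hk, sub_zero]
    exact Pi.single_nonneg (α := fun _ => ℝ) |>.2 zero_le_one k
  rcases i with ⟨j, e, _ | _⟩ | k
  · exact ⟨squareSide j e, squareJoin_mulVec_squareSide j e, by simp [squareSide], hsub _ _⟩
  · refine ⟨-squareSide j e, by rw [mulVec_neg, squareJoin_mulVec_squareSide, neg_zero],
      by simp [squareSide], ?_⟩
    rw [squareSide, neg_sub]
    exact hsub _ _
  · refine ⟨-Pi.single (.inr k) 1, by rw [mulVec_neg, squareJoin_mulVec_single_inr, neg_zero],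
      by simp, fun i hi => ?_⟩
    rw [Pi.neg_apply, Pi.single_eq_of_ne hi, neg_zero]

lemma CircuitsLift.subset_image_squareJoin [Nonempty J] {p q n : Type*} [Fintype n]
    {A : Matrix p n ℝ} {B : Matrix q n ℝ} {P : Set (n → ℝ)} (H : CircuitsLift A B P)
    (π : (SquareIndex J K → ℝ) →ₗ[ℝ] (n → ℝ))
    (hπ : π '' stdPolySet (squareJoin J K) (Pi.single none 1) = P) :
    circuits A B ⊆ π '' stdCircuits (squareJoin J K) := by
  let c : ℝ := (2 * Fintype.card J)⁻¹
  have hc : 0 < c := by positivity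
  have hconst : squareJoin J K *ᵥ (fun _ => c) = Pi.single none 1 := by
    rw [squareJoin_mulVec_const]
    congr 1
    simp only [c]
    field
  refine H.subset_image_std ⟨_, hconst, fun _ => hc⟩ (fun i => ?_) π hπ
  obtain ⟨u, hu, hui, hnonneg⟩ := exists_squareJoin_mulVec_eq_zero_neg_at i
  refine ⟨(fun _ => c) + c • u, by rw [mulVec_add, mulVec_smul, hu, smul_zero, add_zero, hconst],
    by simp [hui], fun k hk => ?_⟩
  exact add_pos_of_pos_of_nonneg hc (mul_nonneg hc.le (hnonneg k hk))

lemma exists_eq_smul_squareCorner_sub {x : SquareIndex J K → ℝ}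
    (hx : x ∈ stdCircuits (squareJoin J K)) {i : J} (hi : squareWeight i false x ≠ 0) :
    ∃ (t : ℝ) (j : J) (e e' f f' : Bool), i ≠ j ∧
      x = t • (squareCorner i e e' - squareCorner j f f') := by
  obtain ⟨hsum, hbal⟩ := squareJoin_mulVec_eq_zero_iff.1 hx.1
  obtain ⟨j, hij, hj⟩ : ∃ j, i ≠ j ∧ squareWeight j false x ≠ 0 := by
    by_contra! hzero
    exact hi (hsum ▸ (Fintype.sum_eq_single i fun j hj => hzero j hj.symm).symm)
  obtain ⟨e, he⟩ := exists_ne_zero_of_squareWeight_ne_zero hi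
  obtain ⟨e', he'⟩ := exists_ne_zero_of_squareWeight_ne_zero (hbal i ▸ hi)
  obtain ⟨f, hf⟩ := exists_ne_zero_of_squareWeight_ne_zero hj
  obtain ⟨f', hf'⟩ := exists_ne_zero_of_squareWeight_ne_zero (hbal j ▸ hj)
  have hker : squareJoin J K *ᵥ (squareCorner i e e' - squareCorner j f f') = 0 := by
    rw [mulVec_sub, squareJoin_mulVec_squareCorner, squareJoin_mulVec_squareCorner, sub_self]
  have hne : (squareCorner i e e' - squareCorner j f f' : SquareIndex J K → ℝ) ≠ 0 := fun h => by
    simpa [squareCorner, hij] using congrFun h (.inl (i, false, e))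
  obtain ⟨t, ht⟩ := exists_smul_eq_of_mem_stdCircuits hx hker hne fun k hk => by
    have hk_ne {l : SquareIndex J K} (hl : x l ≠ 0) : k ≠ l := fun h => hl (h ▸ hk)
    simp [squareCorner, hk_ne he, hk_ne he', hk_ne hf, hk_ne hf']
  exact ⟨t, j, e, e', f, f', hij, ht.symm⟩

lemma stdCircuits_squareJoin_cases {x : SquareIndex J K → ℝ}
    (hx : x ∈ stdCircuits (squareJoin J K)) :
    (∃ (t : ℝ) (k : K), x = t • Pi.single (.inr k) 1) ∨
    (∃ (t : ℝ) (j : J) (e : Bool), x = t • squareSide j e) ∨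
    ∃ (t : ℝ) (i j : J) (e e' f f' : Bool), i ≠ j ∧
      x = t • (squareCorner i e e' - squareCorner j f f') := by
  by_cases hweight : ∃ i, squareWeight i false x ≠ 0
  · obtain ⟨i, hi⟩ := hweight
    obtain ⟨t, j, hij⟩ := exists_eq_smul_squareCorner_sub hx hi
    exact .inr (.inr ⟨t, i, j, hij⟩)
  push Not at hweight
  have hbal := (squareJoin_mulVec_eq_zero_iff.1 hx.1).2
  obtain ⟨⟨j, e, f⟩ | k, hi⟩ := Function.ne_iff.1 hx.2.1
  · have hadd : x (.inl (j, e, false)) + x (.inl (j, e, true)) = 0 := by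
      cases e
      exacts [hweight j, (hbal j).symm.trans (hweight j)]
    have hboth : x (.inl (j, e, true)) ≠ 0 ∧ x (.inl (j, e, false)) ≠ 0 := by
      rw [Pi.zero_apply] at hi
      cases f <;> grind
    obtain ⟨t, ht⟩ := exists_smul_eq_of_mem_stdCircuits hx (squareJoin_mulVec_squareSide j e)
      (fun h => by simpa [squareSide] using congrFun h (.inl (j, e, true))) fun k hk => by
        have hk_ne {l : SquareIndex J K} (hl : x l ≠ 0) : k ≠ l := fun h => hl (h ▸ hk)
        simp [squareSide, hk_ne hboth.1, hk_ne hboth.2]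
    exact .inr (.inl ⟨t, j, e, ht.symm⟩)
  · obtain ⟨t, ht⟩ := exists_smul_eq_of_mem_stdCircuits hx (squareJoin_mulVec_single_inr k)
      (by simp) fun l hl => Pi.single_eq_of_ne (by rintro rfl; exact hi hl) _
    exact .inl ⟨t, k, ht.symm⟩

end SquareJoin

section ParallelogramJoin

variable {E : Type*} [AddCommGroup E]

/-- The corner `(f, f')` of the parallelogram with base point `p` spanned by `s false` and
`s true`. -/
def parallelogramCorner (p : E) (s : Bool → E) (f f' : Bool) : E :=
  p + (cond f (s false) 0 + cond f' (s true) 0)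

variable [Module ℝ E]

lemma smul_add_smul_add_smul_mem_of_corners {C : PointedCone ℝ E} {p a b : E} (hp : p ∈ C)
    (ha : p + a ∈ C) (hb : p + b ∈ C) (hab : p + (a + b) ∈ C) {w α β : ℝ} (hα : 0 ≤ α)
    (hαw : α ≤ w) (hβ : 0 ≤ β) (hβw : β ≤ w) : w • p + (α • a + β • b) ∈ C := by
  wlog hαβ : α ≤ β generalizing a b α β
  · rw [add_comm (α • a)]
    exact this hb ha (by rwa [add_comm b]) hβ hβw hα hαw (le_of_not_ge hαβ)
  have hsplit : w • p + (α • a + β • b) =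
      α • (p + (a + b)) + ((β - α) • (p + b) + (w - β) • p) := by module
  rw [hsplit]
  exact add_mem (C.smul_mem hα hab)
    (add_mem (C.smul_mem (sub_nonneg.2 hαβ) hb) (C.smul_mem (sub_nonneg.2 hβw) hp))

variable {J K : Type*} [Fintype J] [Fintype K]

/-- The projection of a join of squares with an orthant that maps the `j`-th square to the
parallelogram with base point `p j` and sides `s j`, and the `k`-th ray to `r k`. -/
def parallelogramJoinMap (p : J → E) (s : J → Bool → E) (r : K → E) :
    (SquareIndex J K → ℝ) →ₗ[ℝ] E :=
  Fintype.linearCombination ℝ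
    (Sum.elim (fun i => cond i.2.1 0 (p i.1) + cond i.2.2 (s i.1 i.2.1) 0) r)

lemma parallelogramJoinMap_apply (p : J → E) (s : J → Bool → E) (r : K → E)
    (z : SquareIndex J K → ℝ) :
    parallelogramJoinMap p s r z =
      ∑ j, (squareWeight j false z • p j +
        (z (.inl (j, false, true)) • s j false + z (.inl (j, true, true)) • s j true)) +
      ∑ k, z (.inr k) • r k := by
  simp only [parallelogramJoinMap, Fintype.linearCombination_apply, Fintype.sum_sum_type,
    Fintype.sum_prod_type, Fintype.sum_bool, Sum.elim_inl, Sum.elim_inr, cond_true, cond_false,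
    squareWeight, LinearMap.add_apply, LinearMap.proj_apply]
  congr 1
  exact Finset.sum_congr rfl fun _ _ => by module

variable [DecidableEq J] [DecidableEq K] (p : J → E) (s : J → Bool → E) (r : K → E)

lemma parallelogramJoinMap_squareCorner (j : J) (f f' : Bool) :
    parallelogramJoinMap p s r (squareCorner j f f') = parallelogramCorner (p j) (s j) f f' := by
  simp [parallelogramJoinMap, squareCorner, parallelogramCorner, add_assoc]

lemma parallelogramJoinMap_squareSide (j : J) (e : Bool) :
    parallelogramJoinMap p s r (squareSide j e) = s j e := by
  simp [parallelogramJoinMap, squareSide]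

lemma parallelogramJoinMap_single_inr (k : K) :
    parallelogramJoinMap p s r (Pi.single (.inr k) 1) = r k := by
  simp [parallelogramJoinMap]

variable {p s r}

lemma not_mem_image_stdCircuits_squareJoin {g : E} (hs : ∀ j e (t : ℝ), t • s j e ≠ g)
    (hr : ∀ k (t : ℝ), t • r k ≠ g)
    (hcorner : ∀ i j, i ≠ j → ∀ e e' f f' (t : ℝ),
      t • (parallelogramCorner (p i) (s i) e e' - parallelogramCorner (p j) (s j) f f') ≠ g) :
    g ∉ parallelogramJoinMap p s r '' stdCircuits (squareJoin J K) := by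
  rintro ⟨x, hx, rfl⟩
  obtain ⟨t, k, rfl⟩ | ⟨t, j, e, rfl⟩ | ⟨t, i, j, e, e', f, f', hij, rfl⟩ :=
    stdCircuits_squareJoin_cases hx
  · exact hr k t (by rw [map_smul, parallelogramJoinMap_single_inr])
  · exact hs j e t (by rw [map_smul, parallelogramJoinMap_squareSide])
  · refine hcorner i j hij e e' f f' t ?_
    rw [map_smul, map_sub, parallelogramJoinMap_squareCorner, parallelogramJoinMap_squareCorner]

variable {q₁ q₂ n : Type*} [Fintype n] {A : Matrix q₁ n ℝ} {b : q₁ → ℝ} {B : Matrix q₂ n ℝ}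
  {d : q₂ → ℝ} {p : J → n → ℝ} {s : J → Bool → n → ℝ} {r : K → n → ℝ}

lemma parallelogramJoinMap_mem_polySet
    (hp : ∀ j f f', parallelogramCorner (p j) (s j) f f' ∈ polySet A b B d)
    (hr : ∀ k, r k ∈ recessionCone A B) {z : SquareIndex J K → ℝ}
    (hz : z ∈ stdPolySet (squareJoin J K) (Pi.single none 1)) :
    parallelogramJoinMap p s r z ∈ polySet A b B d := by
  obtain ⟨hAz, hz⟩ := mem_stdPolySet.1 hz
  obtain ⟨hsum, hbal⟩ := squareJoin_mulVec_eq_single_iff.1 hAz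
  have hcorner (j : J) (f f' : Bool) := mk_one_mem_homogenization.2 (hp j f f')
  have hj (j : J) : squareWeight j false z • (p j, (1 : ℝ)) +
      (z (.inl (j, false, true)) • (s j false, (0 : ℝ)) +
        z (.inl (j, true, true)) • (s j true, (0 : ℝ))) ∈ homogenization A b B d := by
    refine smul_add_smul_add_smul_mem_of_corners ?_ ?_ ?_ ?_ (hz _) ?_ (hz _) ?_
    · simpa [parallelogramCorner] using hcorner j false false
    · simpa [parallelogramCorner] using hcorner j true false
    · simpa [parallelogramCorner] using hcorner j false true
    · simpa [parallelogramCorner] using hcorner j true true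
    · exact le_add_of_nonneg_left (hz _)
    · rw [hbal j]
      exact le_add_of_nonneg_left (hz _)
  have hk (k : K) : z (.inr k) • (r k, (0 : ℝ)) ∈ homogenization A b B d :=
    PointedCone.smul_mem _ (hz _) (mk_zero_mem_homogenization.2 (hr k))
  rw [← mk_one_mem_homogenization, ← hsum, parallelogramJoinMap_apply]
  convert add_mem (sum_mem fun j (_ : j ∈ Finset.univ) => hj j)
    (sum_mem fun k (_ : k ∈ Finset.univ) => hk k) using 1
  simp [Prod.ext_iff, Prod.fst_sum, Prod.snd_sum]

lemma polySet_subset_image_of_homogenization_le_hull {q₁' q₂' n' : Type*} [Fintype n']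
    {A' : Matrix q₁' n' ℝ} {b' : q₁' → ℝ} {B' : Matrix q₂' n' ℝ} {d' : q₂' → ℝ}
    {V R : Set (n → ℝ)} (hhull : homogenization A b B d ≤ .hull ℝ (V ×ˢ {1} ∪ R ×ˢ {0}))
    (π : (n' → ℝ) →ₗ[ℝ] (n → ℝ)) (hV : V ⊆ π '' polySet A' b' B' d')
    (hR : R ⊆ π '' recessionCone A' B') : polySet A b B d ⊆ π '' polySet A' b' B' d' := by
  have hmap : homogenization A b B d ≤
      (homogenization A' b' B' d').map (π.prodMap LinearMap.id) := by
    refine hhull.trans (Submodule.span_le.2 ?_)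
    rintro ⟨x, t⟩ (⟨hx, rfl⟩ | ⟨hx, rfl⟩)
    · obtain ⟨z, hz, rfl⟩ := hV hx
      exact ⟨(z, 1), mk_one_mem_homogenization.2 hz, rfl⟩
    · obtain ⟨z, hz, rfl⟩ := hR hx
      exact ⟨(z, 0), mk_zero_mem_homogenization.2 hz, rfl⟩
  intro x hx
  obtain ⟨⟨z, t⟩, hz, heq⟩ := hmap (mk_one_mem_homogenization.2 hx)
  obtain ⟨rfl, rfl⟩ := Prod.mk.inj heq
  exact ⟨z, mk_one_mem_homogenization.1 hz, rfl⟩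

lemma image_stdPolySet_squareJoin {V R : Set (n → ℝ)}
    (hhull : homogenization A b B d ≤ .hull ℝ (V ×ˢ {1} ∪ R ×ˢ {0}))
    (hp : ∀ j f f', parallelogramCorner (p j) (s j) f f' ∈ polySet A b B d)
    (hr : ∀ k, r k ∈ recessionCone A B)
    (hV : ∀ v ∈ V, ∃ j, v ∈ segment ℝ (p j) (p j + (s j false + s j true)))
    (hR : R ⊆ Set.range r) :
    parallelogramJoinMap p s r '' stdPolySet (squareJoin J K) (Pi.single none 1) =
      polySet A b B d := by
  refine Set.Subset.antisymm
    (Set.image_subset_iff.2 fun z => parallelogramJoinMap_mem_polySet hp hr)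
    (polySet_subset_image_of_homogenization_le_hull hhull _ (fun v hv => ?_) fun x hx => ?_)
  · obtain ⟨j, hj⟩ := hV v hv
    have hcorner (f f' : Bool) : parallelogramCorner (p j) (s j) f f' ∈
        parallelogramJoinMap p s r '' stdPolySet (squareJoin J K) (Pi.single none 1) :=
      ⟨squareCorner j f f', mem_stdPolySet.2 ⟨squareJoin_mulVec_squareCorner j f f',
        add_nonneg (Pi.single_nonneg.2 zero_le_one) (Pi.single_nonneg.2 zero_le_one)⟩,
        parallelogramJoinMap_squareCorner p s r j f f'⟩
    refine ((convex_polySet _ _ _ _).linear_image _).segment_subset ?_ ?_ hj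
    · simpa [parallelogramCorner] using hcorner false false
    · simpa [parallelogramCorner] using hcorner true true
  · obtain ⟨k, rfl⟩ := hR hx
    refine ⟨Pi.single (.inr k) 1, ⟨squareJoin_mulVec_single_inr k, ?_⟩,
      parallelogramJoinMap_single_inr p s r k⟩
    rw [neg_mulVec, one_mulVec, neg_nonpos]
    exact Pi.single_nonneg.2 zero_le_one

end ParallelogramJoin

section ParallelogramFamily

lemma exists_segment_of_collinear {E : Type*} [AddCommGroup E] [Module ℝ E] {C : Set E} {g : E}
    (hC : C.Finite) (hne : C.Nonempty) (hpar : ∀ v ∈ C, ∀ w ∈ C, w - v ∈ ℝ ∙ g) :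
    ∃ lo ∈ C, ∃ hi ∈ C, C ⊆ segment ℝ lo hi := by
  obtain ⟨v₀, hv₀⟩ := hne
  have hcoord : ∀ v ∈ C, ∃ t : ℝ, t • g = v - v₀ := fun v hv =>
    Submodule.mem_span_singleton.1 (hpar v₀ hv₀ v hv)
  choose! t ht using hcoord
  obtain ⟨lo, hlo, hmin⟩ := C.exists_min_image t hC ⟨v₀, hv₀⟩
  obtain ⟨hi, hhi, hmax⟩ := C.exists_max_image t hC ⟨v₀, hv₀⟩
  let line : ℝ →ᵃ[ℝ] E := AffineMap.lineMap v₀ (v₀ + g)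
  have hline : ∀ v ∈ C, line (t v) = v := fun v hv => by
    simp [line, AffineMap.lineMap_apply, ht v hv]
  refine ⟨lo, hlo, hi, hhi, fun v hv => ?_⟩
  rw [← hline lo hlo, ← hline hi hhi, ← image_segment, segment_eq_Icc (hmin hi hhi)]
  exact ⟨t v, ⟨hmin v hv, hmax v hv⟩, hline v hv⟩

variable {p q n : Type*} [Fintype n] {A : Matrix p n ℝ} {b : p → ℝ} {B : Matrix q n ℝ} {d : q → ℝ}

lemma exists_parallelogram_of_not_isEdgeDirection [Finite q] {g x y : n → ℝ} (hg : g ≠ 0)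
    (hedge : ¬ IsEdgeDirection (polySet A b B d) g) (hx : x ∈ polySet A b B d)
    (hy : y ∈ polySet A b B d) {ρ : (n → ℝ) →ₗ[ℝ] (n → ℝ)} (hρ : LinearMap.ker ρ = ℝ ∙ g)
    (hxy : ρ x = ρ y) {U : Set (n → ℝ)} (hU : IsOpen U) (hxU : ρ x ∈ U) :
    ∃ s : Bool → n → ℝ, x + (s false + s true) = y ∧ (∀ e (t : ℝ), t • s e ≠ g) ∧
      ∀ f f', parallelogramCorner x s f f' ∈ polySet A b B d ∧
        ρ (parallelogramCorner x s f f') ∈ U := by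
  obtain ⟨δ, hδ⟩ : ∃ δ : ℝ, δ • g = y - x := by
    rw [← Submodule.mem_span_singleton, ← hρ, LinearMap.sub_mem_ker_iff, hxy]
  rcases eq_or_ne δ 0 with rfl | hδ0
  · obtain rfl : y = x := by simpa [sub_eq_zero, eq_comm] using hδ
    exact ⟨0, by simp, by simpa using hg.symm, by simp [parallelogramCorner, hx, hxU]⟩
  obtain ⟨u, hu, hmem⟩ :=
    exists_transversal_of_not_isEdgeDirection hg hδ0 hx hy hδ.symm hedge
  have hmid : ρ (midpoint ℝ x y) = ρ x := by
    rw [midpoint_eq_smul_add, map_smul, map_add, ← hxy, ← two_smul ℝ (ρ x), smul_smul]; simp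
  have hnear : ∀ᶠ ε : ℝ in 𝓝 0, ρ (midpoint ℝ x y + ε • u) ∈ U := by
    have hcont : Continuous fun ε : ℝ => ρ (midpoint ℝ x y + ε • u) :=
      ρ.continuous_of_finiteDimensional.comp (by fun_prop)
    exact hcont.continuousAt.eventually_mem (hU.mem_nhds (by simpa [hmid] using hxU))
  obtain ⟨ε, hε, hpos, hneg⟩ := exists_pos_and_neg_of_eventually (hmem.and hnear)
  have hmid_add (c : ℝ) : x + ((δ / 2) • g + c • u) = midpoint ℝ x y + c • u := by
    rw [midpoint_eq_smul_add, invOf_eq_inv, eq_add_of_sub_eq hδ.symm]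
    module
  have hy_eq : x + ((δ / 2) • g + ε • u + ((δ / 2) • g + -ε • u)) = y := by
    rw [eq_add_of_sub_eq hδ.symm]
    module
  refine ⟨fun e => (δ / 2) • g + (cond e (-ε) ε) • u, hy_eq, fun e => ?_, fun f f' => ?_⟩
  · exact smul_smul_add_smul_ne hg hu _ (by cases e <;> simp [hε.ne'])
  · cases f <;> cases f' <;> simp only [parallelogramCorner, cond_true, cond_false, add_zero,
      zero_add, hmid_add, hy_eq]
    exacts [⟨hx, hxU⟩, hneg, hpos, ⟨hy, hxy ▸ hxU⟩]

lemma exists_parallelogram_family [Finite q] {g : n → ℝ} (hg : g ≠ 0)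
    (hedge : ¬ IsEdgeDirection (polySet A b B d) g) {ρ : (n → ℝ) →ₗ[ℝ] (n → ℝ)}
    (hρ : LinearMap.ker ρ = ℝ ∙ g) {V : Set (n → ℝ)} (hV : V.Finite) (hVP : V ⊆ polySet A b B d) :
    ∃ (x : ρ '' V → n → ℝ) (s : ρ '' V → Bool → n → ℝ),
      (∀ j f f', parallelogramCorner (x j) (s j) f f' ∈ polySet A b B d) ∧
      (∀ v ∈ V, ∃ j, v ∈ segment ℝ (x j) (x j + (s j false + s j true))) ∧
      (∀ j e (t : ℝ), t • s j e ≠ g) ∧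
      ∀ i j, i ≠ j → ∀ e e' f f' (t : ℝ),
        t • (parallelogramCorner (x i) (s i) e e' - parallelogramCorner (x j) (s j) f f') ≠ g := by
  obtain ⟨U, hU, hdisj⟩ := (hV.image ρ).t2_separation
  have hfiber (j : ρ '' V) : ∃ x ∈ V, ∃ y ∈ V, ρ x = j ∧ ρ y = j ∧
      ∀ v ∈ V, ρ v = j → v ∈ segment ℝ x y := by
    have hpar : ∀ v ∈ {v ∈ V | ρ v = j}, ∀ w ∈ {v ∈ V | ρ v = j}, w - v ∈ ℝ ∙ g :=
      fun v hv w hw => hρ ▸ LinearMap.sub_mem_ker_iff.2 (hw.2.trans hv.2.symm)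
    obtain ⟨x, hx, y, hy, hsub⟩ :=
      exists_segment_of_collinear (hV.subset (Set.sep_subset _ _)) j.2 hpar
    exact ⟨x, hx.1, y, hy.1, hx.2, hy.2, fun v hv hvj => hsub ⟨hv, hvj⟩⟩
  choose x hx y hy hxj hyj hseg using hfiber
  have hpara (j : ρ '' V) := exists_parallelogram_of_not_isEdgeDirection hg hedge (hVP (hx j))
    (hVP (hy j)) hρ ((hxj j).trans (hyj j).symm) (hU j).2 ((hxj j).symm ▸ (hU j).1)
  choose s hsum hs hcorner using hpara
  refine ⟨x, s, fun j f f' => (hcorner j f f').1, fun v hv => ⟨⟨ρ v, v, hv, rfl⟩, ?_⟩, hs,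
    fun i j hij e e' f f' t ht => ?_⟩
  · rw [hsum]
    exact hseg _ v hv rfl
  · have hker : t • (parallelogramCorner (x i) (s i) e e' - parallelogramCorner (x j) (s j) f f') ∈
        LinearMap.ker ρ := ht ▸ hρ ▸ Submodule.mem_span_singleton_self g
    have ht0 : t ≠ 0 := (smul_ne_zero_iff.1 (ht ▸ hg)).1
    rw [Submodule.smul_mem_iff _ ht0, LinearMap.sub_mem_ker_iff] at hker
    exact (hdisj i.2 j.2 (Subtype.coe_injective.ne hij)).ne_of_mem (hcorner i e e').2
      (hcorner j f f').2 hker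

theorem CircuitsLift.isEdgeDirection [Finite p] [Finite q]
    (H : CircuitsLift A B (polySet A b B d)) (hne : (polySet A b B d).Nonempty) {g : n → ℝ}
    (hg : g ∈ circuits A B) : IsEdgeDirection (polySet A b B d) g := by
  classical
  by_contra hedge
  obtain ⟨V, hVP, R, hR, hVfin, hRfin, hhull⟩ := exists_finite_homogenization_le_hull
    (Set.sep_subset _ _) (recessionCone_subset_hull_not_parallel hg hne hedge)
  obtain ⟨ρ, hρ⟩ : ∃ ρ : (n → ℝ) →ₗ[ℝ] (n → ℝ), LinearMap.ker ρ = ℝ ∙ g := by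
    obtain ⟨W, hW⟩ := (ℝ ∙ g).exists_isCompl
    exact ⟨_, Submodule.ker_projection hW.symm⟩
  obtain ⟨x₀, hx₀⟩ := hne
  obtain ⟨x, s, hcorner, hV, hs, hdiff⟩ := exists_parallelogram_family hg.2.1 hedge hρ
    (hVfin.insert x₀) (Set.insert_subset hx₀ hVP)
  have := ((hVfin.insert x₀).image ρ).fintype
  have := hRfin.fintype
  have : Nonempty (ρ '' insert x₀ V) := ⟨⟨ρ x₀, x₀, Set.mem_insert _ _, rfl⟩⟩
  have himage := image_stdPolySet_squareJoin (r := ((↑) : R → n → ℝ)) hhull hcorner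
    (fun k => (hR k.2).1) (fun v hv => hV v (Set.mem_insert_of_mem _ hv)) Subtype.range_coe.ge
  exact not_mem_image_stdCircuits_squareJoin hs (fun k => (hR k.2).2) hdiff
    (H.subset_image_squareJoin _ himage hg)

end ParallelogramFamily

section Main

variable {p q n : Type*} [Fintype n] {A : Matrix p n ℝ} {b : p → ℝ} {B : Matrix q n ℝ} {d : q → ℝ}

lemma not_circuitsLift_empty (hne : (circuits A B).Nonempty) : ¬ CircuitsLift A B ∅ := by
  intro H
  obtain ⟨g, hg⟩ := hne
  have hinfeasible (x : Fin 0 → ℝ) : (0 : Matrix (Fin 1) (Fin 0) ℝ) *ᵥ x ≠ fun _ => 1 :=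
    fun hx => by simpa using congrFun hx 0
  have hpt : PointedSet (∅ : Set (Fin 0 → ℝ)) := fun x v hline => absurd (hline 0) (by simp)
  have hirr : Irredundant (0 : Matrix (Fin 1) (Fin 0) ℝ) (fun _ => 1)
      (0 : Matrix (Fin 0) (Fin 0) ℝ) 0 ∅ :=
    ⟨(Set.eq_empty_of_forall_notMem fun x hx => hinfeasible x hx.1).symm,
      by ext x; simpa using hinfeasible x, fun i => i.elim0⟩
  obtain ⟨x, hx, -⟩ := H 0 1 0 0 (fun _ => 1) 0 0 ∅ 0 hpt hirr (by simp) hg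
  exact hx.2.1 (Subsingleton.elim _ _)

theorem stmt_16_general [Finite p] [Finite q] (A : Matrix p n ℝ) (b : p → ℝ) (B : Matrix q n ℝ)
    (d : q → ℝ) :
    (∀ g ∈ circuits A B, IsEdgeDirection (polySet A b B d) g) ↔
      CircuitsLift A B (polySet A b B d) := by
  refine ⟨fun hedge m pQ qQ AQ bQ BQ dQ Q π hpt hirr hπ g hg => ?_, fun H g hg => ?_⟩
  · obtain rfl := hirr.1
    exact (hπ ▸ hedge g hg).mem_image_circuits hpt
  · rcases (polySet A b B d).eq_empty_or_nonempty with hempty | hne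
    · exact absurd (hempty ▸ H) (not_circuitsLift_empty ⟨g, hg⟩)
    · exact H.isEdgeDirection hne hg

end Main

/-- For a pointed polyhedron `P` with an irredundant description, every circuit
of `P` is an edge direction of `P` iff `C(P) ⊆ π(C(Q))` for every pointed polyhedron `Q` with
an irredundant description and every linear `π` with `π(Q) = P`. -/
theorem stmt_16 {n pP qP : ℕ}
    (AP : Matrix (Fin pP) (Fin n) ℝ) (bP : Fin pP → ℝ)
    (BP : Matrix (Fin qP) (Fin n) ℝ) (dP : Fin qP → ℝ)
    (P : Set (Fin n → ℝ)) (hPirr : Irredundant AP bP BP dP P)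
    (hPpt : PointedSet P) :
    (∀ g ∈ circuits AP BP, IsEdgeDirection P g) ↔
      (∀ (m pQ qQ : ℕ)
        (AQ : Matrix (Fin pQ) (Fin m) ℝ) (bQ : Fin pQ → ℝ)
        (BQ : Matrix (Fin qQ) (Fin m) ℝ) (dQ : Fin qQ → ℝ)
        (Q : Set (Fin m → ℝ)) (π : (Fin m → ℝ) →ₗ[ℝ] (Fin n → ℝ)),
        PointedSet Q → Irredundant AQ bQ BQ dQ Q → (fun x => π x) '' Q = P →
        circuits AP BP ⊆ (fun x => π x) '' circuits AQ BQ) := by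
  obtain ⟨rfl, -, -⟩ := hPirr
  exact stmt_16_general AP bP BP dP
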